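/- arXiv:1512.02670 — 4 statements merged into one kernel-verified Lean document; each statement's English description precedes it below -/
import Mathlib

section
/- There exists an absolute constant c > 0 such that the following holds. Let w₀ ≥ 1 and let P be a finite set of N points in ℝ² \ {0} such that every line through the origin contains at most w₀ points of P, and such that P is not contained in a single line through the origin. Then |T(P)| ≥ c·N·w₀^(−1/2). -/
open Finset
open scoped Classical

/-- The standard non-degenerate skew-symmetric bilinear form on `ℝ²`. -/
noncomputable def omegaForm (q q' : ℝ × ℝ) : ℝ := q.1 * q'.2 - q.2 * q'.1

/-- `T(P)`: the set of nonzero values of `ω` on `P × P`. -/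
noncomputable def Tset (P : Finset (ℝ × ℝ)) : Finset ℝ :=
  ((P ×ˢ P).image fun qq => omegaForm qq.1 qq.2).erase 0

/-!
This is Székely's crossing-number method with weighted edges. Since `ω` is invariant under shears,
the points of `P` may be assumed to have distinct abscissae. Each `q ∈ P` partitions the points off
the line `ℝq` into at most `|T(P)|` lines `ω(q, ·) = t`; join consecutive points on each of them,
and weight an edge by the number of `q` that produce it. These `q` are parallel to the edge, so
they lie on one line through the origin and the weight is at most `W ≤ min(w₀, |T(P)|)`. The total
weight is at least `N (N - |T(P)| - W)`. Two of the at most `N |T(P)|` lines meet at most once, so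
the weighted number of crossings is at most `(N |T(P)|)²`. The weighted crossing lemma compares
the two and gives `N² ≲ W |T(P)|²`.

The crossing lemma itself follows by random sampling, first of edges and then of vertices, from the
bound `|E| ≤ 3 |V|` for crossing-free geometric graphs. For the latter, a left-to-right sweep
charges each edge to a vertex in one of three ways, each of which determines the edge.
-/

section SubsetExpect

variable {ι κ : Type*} [DecidableEq ι] {I : Finset ι} {x : ι → ℝ}

/-- The expectation of `F S` over a random subset `S` of `I` that contains each `i ∈ I`
independently with probability `x i`. -/
noncomputable def subsetExpect (I : Finset ι) (x : ι → ℝ) (F : Finset ι → ℝ) : ℝ :=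
  ∑ S ∈ I.powerset, (∏ i ∈ S, x i) * (∏ i ∈ I \ S, (1 - x i)) * F S

lemma subsetExpect_mono (hx : ∀ i ∈ I, x i ∈ Set.Icc 0 1) {F G : Finset ι → ℝ}
    (hFG : ∀ S ⊆ I, F S ≤ G S) : subsetExpect I x F ≤ subsetExpect I x G := by
  refine sum_le_sum fun S hS => ?_
  have hSI : S ⊆ I := mem_powerset.mp hS
  refine mul_le_mul_of_nonneg_left (hFG S hSI) (mul_nonneg ?_ ?_)
  · exact prod_nonneg fun i hi => (hx i (hSI hi)).1
  · exact prod_nonneg fun i hi => sub_nonneg.mpr (hx i (mem_sdiff.mp hi).1).2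

lemma subsetExpect_add (F G : Finset ι → ℝ) :
    subsetExpect I x (fun S => F S + G S) = subsetExpect I x F + subsetExpect I x G := by
  simp only [subsetExpect, mul_add, sum_add_distrib]

lemma subsetExpect_ite_subset {A : Finset ι} (hA : A ⊆ I) (c : ℝ) :
    subsetExpect I x (fun S => if A ⊆ S then c else 0) = c * ∏ i ∈ A, x i := by
  have expand : ∏ i ∈ A, x i = ∏ i ∈ I, (x i + if i ∉ A then 1 - x i else 0) := by
    rw [← prod_subset hA (f := fun i => x i + if i ∉ A then 1 - x i else 0)
      fun i _ hi => by simp [hi]]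
    exact prod_congr rfl fun i hi => by simp [hi]
  rw [expand, prod_add, mul_sum]
  refine sum_congr rfl fun S _ => ?_
  have disjoint_iff : (∀ i ∈ I \ S, i ∉ A) ↔ A ⊆ S := by
    simp only [mem_sdiff, subset_iff]
    exact ⟨fun h i hi => by_contra fun hS => h i ⟨hA hi, hS⟩ hi, fun h i hi hiA => hi.2 (h hiA)⟩
  simp only [prod_ite_zero, disjoint_iff]
  split_ifs <;> ring

lemma subsetExpect_const (c : ℝ) : subsetExpect I x (fun _ => c) = c := by
  simpa using subsetExpect_ite_subset (x := x) (empty_subset I) c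

lemma subsetExpect_sum_filter_subset {K : Finset κ} {A : κ → Finset ι} (hA : ∀ k ∈ K, A k ⊆ I)
    (c : κ → ℝ) :
    subsetExpect I x (fun S => ∑ k ∈ K with A k ⊆ S, c k) = ∑ k ∈ K, c k * ∏ i ∈ A k, x i := by
  rw [← sum_congr rfl fun k hk => subsetExpect_ite_subset (hA k hk) (c k)]
  simp only [subsetExpect, sum_filter, mul_sum]
  exact sum_comm

end SubsetExpect

/-- A non-vertical segment in the plane, oriented from left to right. -/
@[ext]
structure Edge where
  left : ℝ × ℝ
  right : ℝ × ℝ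
  left_lt_right : left.1 < right.1

namespace Edge

/-- The open interval of abscissae over which the segment lies. -/
def span (e : Edge) : Set ℝ := Set.Ioo e.left.1 e.right.1

/-- The slope of the line supporting the segment. -/
noncomputable def slope (e : Edge) : ℝ := (e.right.2 - e.left.2) / (e.right.1 - e.left.1)

/-- The ordinate at abscissa `x` of the line supporting the segment; two segments are collinear
exactly when these functions coincide. -/
noncomputable def height (e : Edge) (x : ℝ) : ℝ := e.left.2 + e.slope * (x - e.left.1)

/-- Two distinct segments cross if their relative interiors meet. Overlapping collinear segments
count as crossing. -/
def Crosses (e f : Edge) : Prop :=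
  e ≠ f ∧ ∃ x ∈ e.span ∩ f.span, e.height x = f.height x

/-- The two endpoints, as a set. -/
noncomputable def endpoints (e : Edge) : Finset (ℝ × ℝ) := {e.left, e.right}

variable {e f : Edge}

lemma card_endpoints (e : Edge) : #e.endpoints = 2 :=
  card_pair fun h => e.left_lt_right.ne (congrArg Prod.fst h)

lemma endpoints_subset {S : Finset (ℝ × ℝ)} :
    e.endpoints ⊆ S ↔ e.left ∈ S ∧ e.right ∈ S := by
  simp [endpoints, insert_subset_iff]

@[simp]
lemma height_left (e : Edge) : e.height e.left.1 = e.left.2 := by simp [height]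

lemma slope_mul_width (e : Edge) :
    e.slope * (e.right.1 - e.left.1) = e.right.2 - e.left.2 :=
  div_mul_cancel₀ _ (sub_pos.mpr e.left_lt_right).ne'

@[simp]
lemma height_right (e : Edge) : e.height e.right.1 = e.right.2 := by
  rw [height, slope_mul_width]; ring

lemma continuous_height (e : Edge) : Continuous e.height := by
  unfold height; fun_prop

lemma height_eq_of_left_eq_of_slope_eq (hleft : e.left = f.left) (hslope : e.slope = f.slope) :
    e.height = f.height := by
  funext x; simp only [height, hleft, hslope]

lemma height_eq_of_eq_of_eq {x y : ℝ} (hxy : x ≠ y) (hx : e.height x = f.height x)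
    (hy : e.height y = f.height y) : e.height = f.height := by
  have hslope : e.slope = f.slope := by
    refine mul_right_cancel₀ (sub_ne_zero.mpr hxy) ?_
    simp only [height] at hx hy
    linear_combination hx - hy
  funext z
  simp only [height, hslope] at hx ⊢
  linear_combination hx

lemma height_lt_height_iff (hleft : f.left = e.left) {x : ℝ} (hx : e.left.1 < x) :
    f.height x < e.height x ↔ f.slope < e.slope := by
  simp only [height, hleft, add_lt_add_iff_left, mul_lt_mul_iff_left₀ (sub_pos.mpr hx)]

lemma height_le_of_not_crosses (hcross : ¬ e.Crosses f) {a b : ℝ} (hab : a < b)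
    (hea : e.left.1 ≤ a) (hfa : f.left.1 ≤ a) (heb : b ≤ e.right.1) (hfb : b ≤ f.right.1)
    (hlt : e.height b < f.height b) : e.height a ≤ f.height a := by
  by_contra! hgt
  obtain ⟨x, ⟨hax, hxb⟩, hx⟩ := intermediate_value_Ioo hab.le
    (f.continuous_height.sub e.continuous_height).continuousOn
    (show (0 : ℝ) ∈ Set.Ioo _ _ from ⟨sub_neg.mpr hgt, sub_pos.mpr hlt⟩)
  refine hcross ⟨fun h => hlt.ne (h ▸ rfl), x, ⟨⟨?_, ?_⟩, ⟨?_, ?_⟩⟩, (sub_eq_zero.mp hx).symm⟩ <;>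
    linarith

end Edge

/-- `V` and `E` form a geometric graph: vertices have distinct abscissae, edges join vertices, and
no vertex lies in the relative interior of an edge. -/
structure IsGeometricGraph (V : Finset (ℝ × ℝ)) (E : Finset Edge) : Prop where
  injOn_fst : Set.InjOn Prod.fst (V : Set (ℝ × ℝ))
  left_mem : ∀ e ∈ E, e.left ∈ V
  right_mem : ∀ e ∈ E, e.right ∈ V
  snd_ne_height : ∀ e ∈ E, ∀ v ∈ V, v.1 ∈ e.span → v.2 ≠ e.height v.1

namespace IsGeometricGraph

variable {V V' : Finset (ℝ × ℝ)} {E E' : Finset Edge} {e f e' f' : Edge}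

lemma mono (hG : IsGeometricGraph V E) (hV : V' ⊆ V) (hE : E' ⊆ E)
    (hends : ∀ e ∈ E', e.endpoints ⊆ V') : IsGeometricGraph V' E' where
  injOn_fst := hG.injOn_fst.mono (coe_subset.mpr hV)
  left_mem e he := (Edge.endpoints_subset.mp (hends e he)).1
  right_mem e he := (Edge.endpoints_subset.mp (hends e he)).2
  snd_ne_height e he v hv := hG.snd_ne_height e (hE he) v (hV hv)

lemma endpoints_subset (hG : IsGeometricGraph V E) (he : e ∈ E) : e.endpoints ⊆ V :=
  Edge.endpoints_subset.mpr ⟨hG.left_mem e he, hG.right_mem e he⟩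

lemma eq_of_height_eq (hG : IsGeometricGraph V E) (he : e ∈ E) (hf : f ∈ E)
    (hheight : e.height = f.height) (hef : e.left.1 < f.right.1) (hfe : f.left.1 < e.right.1) :
    e = f := by
  have hleft : e.left.1 = f.left.1 := by
    rcases lt_trichotomy e.left.1 f.left.1 with h | h | h
    · exact absurd (by simp [hheight]) (hG.snd_ne_height e he f.left (hG.left_mem f hf) ⟨h, hfe⟩)
    · exact h
    · exact absurd (by simp [← hheight]) (hG.snd_ne_height f hf e.left (hG.left_mem e he) ⟨h, hef⟩)
  have hright : e.right.1 = f.right.1 := by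
    rcases lt_trichotomy e.right.1 f.right.1 with h | h | h
    · exact absurd (by simp [← hheight])
        (hG.snd_ne_height f hf e.right (hG.right_mem e he) ⟨hfe, h⟩)
    · exact h
    · exact absurd (by simp [hheight]) (hG.snd_ne_height e he f.right (hG.right_mem f hf) ⟨hef, h⟩)
  exact Edge.ext (hG.injOn_fst (hG.left_mem e he) (hG.left_mem f hf) hleft)
    (hG.injOn_fst (hG.right_mem e he) (hG.right_mem f hf) hright)

lemma eq_of_left_eq_of_slope_eq (hG : IsGeometricGraph V E) (he : e ∈ E) (hf : f ∈ E)
    (hleft : e.left = f.left) (hslope : e.slope = f.slope) : e = f :=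
  hG.eq_of_height_eq he hf (Edge.height_eq_of_left_eq_of_slope_eq hleft hslope)
    (hleft ▸ f.left_lt_right) (hleft ▸ e.left_lt_right)

lemma eq_of_height_eq_of_mem_span (hG : IsGeometricGraph V E) (he : e ∈ E) (hf : f ∈ E)
    (hheight : e.height = f.height) {x : ℝ} (hxe : x ∈ e.span) (hxf : x ∈ f.span) : e = f :=
  hG.eq_of_height_eq he hf hheight (hxe.1.trans hxf.2) (hxf.1.trans hxe.2)

lemma height_ne_of_crosses (hG : IsGeometricGraph V E) (he : e ∈ E) (hf : f ∈ E)
    (hcross : e.Crosses f) : e.height ≠ f.height := fun h => by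
  obtain ⟨hne, x, ⟨hxe, hxf⟩, -⟩ := hcross
  exact hne (hG.eq_of_height_eq_of_mem_span he hf h hxe hxf)

lemma disjoint_endpoints_of_crosses (hG : IsGeometricGraph V E) (he : e ∈ E) (hf : f ∈ E)
    (hcross : e.Crosses f) : Disjoint e.endpoints f.endpoints := by
  have hheight := hG.height_ne_of_crosses he hf hcross
  obtain ⟨-, x, ⟨hxe, hxf⟩, hx⟩ := hcross
  have hleft : e.left ≠ f.left := fun h => hheight <|
    Edge.height_eq_of_eq_of_eq hxe.1.ne (by rw [e.height_left, h, f.height_left]) hx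
  have hright : e.right ≠ f.right := fun h => hheight <|
    Edge.height_eq_of_eq_of_eq hxe.2.ne hx (by rw [e.height_right, h, f.height_right])
  have hleft_right : e.left ≠ f.right := fun h =>
    (hxe.1.trans hxf.2).ne (congrArg Prod.fst h)
  have hright_left : e.right ≠ f.left := fun h =>
    (hxf.1.trans hxe.2).ne' (congrArg Prod.fst h)
  simp [Edge.endpoints, hleft.symm, hright.symm, hleft_right.symm, hright_left.symm]

lemma eq_and_eq_of_crosses (hG : IsGeometricGraph V E) (he : e ∈ E) (hf : f ∈ E) (he' : e' ∈ E)
    (hf' : f' ∈ E) (hcross : e.Crosses f) (hcross' : e'.Crosses f')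
    (hheight : e.height = e'.height) (hheight' : f.height = f'.height) : e = e' ∧ f = f' := by
  have hne := hG.height_ne_of_crosses he hf hcross
  obtain ⟨-, x, ⟨hxe, hxf⟩, hx⟩ := hcross
  obtain ⟨-, y, ⟨hye, hyf⟩, hy⟩ := hcross'
  obtain rfl : x = y := by
    by_contra hxy
    exact hne (Edge.height_eq_of_eq_of_eq hxy hx (by rw [hheight, hheight', hy]))
  exact ⟨hG.eq_of_height_eq_of_mem_span he he' hheight hxe hye,
    hG.eq_of_height_eq_of_mem_span hf hf' hheight' hxf hyf⟩

end IsGeometricGraph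

namespace Edge

/-- `e` has the smallest slope among the edges of `E` with the same left endpoint. -/
def IsLowestFromLeft (E : Finset Edge) (e : Edge) : Prop :=
  ∀ g ∈ E, g.left = e.left → e.slope ≤ g.slope

/-- `e` follows `f` in the order by slope of the edges of `E` with a given left endpoint. -/
def IsNextAbove (E : Finset Edge) (e f : Edge) : Prop :=
  f.left = e.left ∧ f.slope < e.slope ∧
    ∀ g ∈ E, g.left = e.left → f.slope < g.slope → e.slope ≤ g.slope

/-- `e` is a lowest one among the edges of `E` that pass strictly above the point `z`. -/
def IsLowestAbove (E : Finset Edge) (e : Edge) (z : ℝ × ℝ) : Prop :=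
  z.1 ∈ e.span ∧ z.2 < e.height z.1 ∧
    ∀ g ∈ E, z.1 ∈ g.span → z.2 < g.height z.1 → e.height z.1 ≤ g.height z.1

/-- `e` is a highest one among the edges of `E` that pass strictly below the point `z`. -/
def IsHighestBelow (E : Finset Edge) (e : Edge) (z : ℝ × ℝ) : Prop :=
  z.1 ∈ e.span ∧ e.height z.1 < z.2 ∧
    ∀ g ∈ E, z.1 ∈ g.span → g.height z.1 < z.2 → g.height z.1 ≤ e.height z.1

/-- `z` lies between the edges `f` (below) and `e` (above), boundary included. For edges with a
common left endpoint this is a triangle, without its apex. -/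
def Between (f e : Edge) (z : ℝ × ℝ) : Prop :=
  e.left.1 < z.1 ∧ z.1 ≤ e.right.1 ∧ z.1 ≤ f.right.1 ∧ f.height z.1 ≤ z.2 ∧ z.2 ≤ e.height z.1

variable {E : Finset Edge} {e f : Edge}

lemma exists_isNextAbove (h : ¬ e.IsLowestFromLeft E) : ∃ f ∈ E, e.IsNextAbove E f := by
  simp only [IsLowestFromLeft, not_forall, not_le] at h
  obtain ⟨g, hg, hleft, hslope⟩ := h
  obtain ⟨f, hf, hmax⟩ := exists_max_image {g ∈ E | g.left = e.left ∧ g.slope < e.slope} slope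
    ⟨g, mem_filter.mpr ⟨hg, hleft, hslope⟩⟩
  obtain ⟨hfE, hfleft, hfslope⟩ := mem_filter.mp hf
  refine ⟨f, hfE, hfleft, hfslope, fun g hg hgleft hfg => ?_⟩
  by_contra! hge
  exact (hmax g (mem_filter.mpr ⟨hg, hgleft, hge⟩)).not_gt hfg

lemma IsNextAbove.height_lt (h : e.IsNextAbove E f) {x : ℝ} (hx : e.left.1 < x) :
    f.height x < e.height x :=
  (height_lt_height_iff h.1 hx).mpr h.2.1

lemma IsLowestAbove.eq (hplanar : ∀ e ∈ E, ∀ f ∈ E, ¬ e.Crosses f) (he : e ∈ E) (hf : f ∈ E)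
    {z : ℝ × ℝ} (hez : e.IsLowestAbove E z) (hfz : f.IsLowestAbove E z) : e = f := by
  by_contra hne
  exact hplanar e he f hf ⟨hne, z.1, ⟨hez.1, hfz.1⟩,
    le_antisymm (hez.2.2 f hf hfz.1 hfz.2.1) (hfz.2.2 e he hez.1 hez.2.1)⟩

lemma IsHighestBelow.eq (hplanar : ∀ e ∈ E, ∀ f ∈ E, ¬ e.Crosses f) (he : e ∈ E) (hf : f ∈ E)
    {z : ℝ × ℝ} (hez : e.IsHighestBelow E z) (hfz : f.IsHighestBelow E z) : e = f := by
  by_contra hne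
  exact hplanar e he f hf ⟨hne, z.1, ⟨hez.1, hfz.1⟩,
    le_antisymm (hfz.2.2 e he hez.1 hez.2.1) (hez.2.2 f hf hfz.1 hfz.2.1)⟩

lemma card_isLowestAbove_le (V : Finset (ℝ × ℝ)) (hplanar : ∀ e ∈ E, ∀ f ∈ E, ¬ e.Crosses f) :
    #{e ∈ E | ∃ z ∈ V, e.IsLowestAbove E z} ≤ #V := by
  refine card_le_card_of_forall_subsingleton (fun e z => e.IsLowestAbove E z)
    (fun e he => (mem_filter.mp he).2) ?_
  rintro z - e ⟨he, hez⟩ f ⟨hf, hfz⟩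
  exact hez.eq hplanar (mem_filter.mp he).1 (mem_filter.mp hf).1 hfz

end Edge

/-- Ordered pairs of crossing edges, so that every crossing is counted twice. -/
noncomputable def crossingPairs (E : Finset Edge) : Finset (Edge × Edge) :=
  {r ∈ E ×ˢ E | r.1.Crosses r.2}

lemma mem_crossingPairs {E : Finset Edge} {r : Edge × Edge} :
    r ∈ crossingPairs E ↔ r.1 ∈ E ∧ r.2 ∈ E ∧ r.1.Crosses r.2 := by
  simp [crossingPairs, and_assoc]

namespace IsGeometricGraph

variable {V : Finset (ℝ × ℝ)} {E : Finset Edge} {e f g : Edge} {z : ℝ × ℝ}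

lemma exists_leftmost_between (hG : IsGeometricGraph V E) (he : e ∈ E) (hf : f ∈ E)
    (hnext : e.IsNextAbove E f) :
    ∃ z ∈ V, f.Between e z ∧ ∀ v ∈ V, f.Between e v → z.1 ≤ v.1 := by
  have hnonempty : {v ∈ V | f.Between e v}.Nonempty := by
    rcases le_total e.right.1 f.right.1 with h | h
    · refine ⟨e.right, mem_filter.mpr ⟨hG.right_mem e he, e.left_lt_right, le_rfl, h, ?_, ?_⟩⟩
      · simpa using (hnext.height_lt e.left_lt_right).le
      · simp
    · have hlt : e.left.1 < f.right.1 := hnext.1 ▸ f.left_lt_right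
      refine ⟨f.right, mem_filter.mpr ⟨hG.right_mem f hf, hlt, h, le_rfl, ?_, ?_⟩⟩
      · simp
      · simpa using (hnext.height_lt hlt).le
  obtain ⟨z, hz, hmin⟩ := exists_min_image _ Prod.fst hnonempty
  obtain ⟨hzV, hbetween⟩ := mem_filter.mp hz
  exact ⟨z, hzV, hbetween, fun v hv hvb => hmin v (mem_filter.mpr ⟨hv, hvb⟩)⟩

/- An edge passing strictly between `f` and `e` over the leftmost vertex `z` cannot leave the
triangle to the left of `z` without crossing `e` or `f`. So it starts inside the triangle, against
the choice of `z`, or at the apex, against `e` being next above `f`. -/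
lemma not_height_between_of_leftmost (hG : IsGeometricGraph V E)
    (hplanar : ∀ e ∈ E, ∀ f ∈ E, ¬ e.Crosses f) (he : e ∈ E) (hf : f ∈ E) (hg : g ∈ E)
    (hnext : e.IsNextAbove E f) (hz : f.Between e z) (hmin : ∀ v ∈ V, f.Between e v → z.1 ≤ v.1)
    (hzg : z.1 ∈ g.span) (hfg : f.height z.1 < g.height z.1) : e.height z.1 ≤ g.height z.1 := by
  by_contra! hge
  obtain ⟨hez, hze, hzf, -, -⟩ := hz
  have height_between (a : ℝ) (hea : e.left.1 ≤ a) (hga : g.left.1 ≤ a) (haz : a < z.1) :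
      f.height a ≤ g.height a ∧ g.height a ≤ e.height a :=
    ⟨Edge.height_le_of_not_crosses (hplanar f hf g hg) haz (hnext.1 ▸ hea) hga hzf hzg.2.le hfg,
      Edge.height_le_of_not_crosses (hplanar g hg e he) haz hga hea hzg.2.le hze hge⟩
  rcases lt_or_ge e.left.1 g.left.1 with hlt | hle
  · have hleft := height_between g.left.1 hlt.le le_rfl hzg.1
    rw [g.height_left] at hleft
    refine (hmin g.left (hG.left_mem g hg) ⟨hlt, ?_, ?_, hleft⟩).not_gt hzg.1 <;> linarith [hzg.1]
  · have hapex : e.left.2 = g.height e.left.1 := by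
      obtain ⟨hlo, hhi⟩ := height_between e.left.1 le_rfl hle hez
      rw [← hnext.1, f.height_left, hnext.1] at hlo
      rw [e.height_left] at hhi
      exact le_antisymm hlo hhi
    rcases hle.lt_or_eq with hlt | heq
    · exact hG.snd_ne_height g hg e.left (hG.left_mem e he) ⟨hlt, hez.trans hzg.2⟩ hapex
    · have hleft : g.left = e.left := hG.injOn_fst (hG.left_mem g hg) (hG.left_mem e he) heq
      have hslope : f.slope < g.slope :=
        (Edge.height_lt_height_iff (hnext.1.trans hleft.symm) hzg.1).mp hfg
      exact (hnext.2.2 g hg hleft hslope).not_gt ((Edge.height_lt_height_iff hleft hez).mp hge)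

lemma lt_right_of_snd_ne_height (hG : IsGeometricGraph V E) (he : e ∈ E) (hz : z ∈ V)
    (hle : z.1 ≤ e.right.1) (hne : z.2 ≠ e.height z.1) : z.1 < e.right.1 := by
  refine hle.lt_of_ne fun h => hne ?_
  rw [hG.injOn_fst hz (hG.right_mem e he) h, e.height_right]

lemma exists_charge (hG : IsGeometricGraph V E)
    (hplanar : ∀ e ∈ E, ∀ f ∈ E, ¬ e.Crosses f) (he : e ∈ E) :
    e.IsLowestFromLeft E ∨ (∃ z ∈ V, e.IsLowestAbove E z) ∨
      ∃ z ∈ V, ∃ f ∈ E, f.IsHighestBelow E z ∧ e.IsNextAbove E f := by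
  by_cases hlowest : e.IsLowestFromLeft E
  · exact Or.inl hlowest
  obtain ⟨f, hf, hnext⟩ := Edge.exists_isNextAbove hlowest
  obtain ⟨z, hzV, hz, hmin⟩ := hG.exists_leftmost_between he hf hnext
  have no_edge_between (g : Edge) (hg : g ∈ E) :=
    hG.not_height_between_of_leftmost hplanar he hf hg hnext hz hmin
  obtain ⟨hez, hze, hzf, hlo, hhi⟩ := hz
  rcases hhi.lt_or_eq with hlt | heq
  · refine Or.inr (Or.inl ⟨z, hzV, ⟨hez, ?_⟩, hlt, fun g hg hzg hgz => ?_⟩)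
    · exact hG.lt_right_of_snd_ne_height he hzV hze hlt.ne
    · exact no_edge_between g hg hzg (hlo.trans_lt hgz)
  · have hlt : f.height z.1 < z.2 := heq ▸ hnext.height_lt hez
    refine Or.inr (Or.inr ⟨z, hzV, f, hf, ⟨⟨hnext.1 ▸ hez, ?_⟩, hlt, fun g hg hzg hgz => ?_⟩,
      hnext⟩)
    · exact hG.lt_right_of_snd_ne_height hf hzV hzf hlt.ne'
    · by_contra! hfg
      exact (no_edge_between g hg hzg hfg).not_gt (heq ▸ hgz)

lemma card_isLowestFromLeft_le (hG : IsGeometricGraph V E) :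
    #{e ∈ E | e.IsLowestFromLeft E} ≤ #V := by
  refine card_le_card_of_injOn Edge.left
    (fun e he => hG.left_mem e (mem_filter.mp he).1) fun e he f hf hleft => ?_
  obtain ⟨he, hel⟩ := mem_filter.mp he
  obtain ⟨hf, hfl⟩ := mem_filter.mp hf
  exact hG.eq_of_left_eq_of_slope_eq he hf hleft
    (le_antisymm (hel f hf hleft.symm) (hfl e he hleft))

lemma card_isNextAbove_isHighestBelow_le (hG : IsGeometricGraph V E)
    (hplanar : ∀ e ∈ E, ∀ f ∈ E, ¬ e.Crosses f) :
    #{e ∈ E | ∃ z ∈ V, ∃ f ∈ E, f.IsHighestBelow E z ∧ e.IsNextAbove E f} ≤ #V := by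
  refine card_le_card_of_forall_subsingleton
    (fun e z => ∃ f ∈ E, f.IsHighestBelow E z ∧ e.IsNextAbove E f)
    (fun e he => (mem_filter.mp he).2) ?_
  rintro z - e ⟨he, f, hf, hfz, hleft, hslope, hnext⟩
    e' ⟨he', f', hf', hfz', hleft', hslope', hnext'⟩
  obtain rfl := hfz.eq hplanar hf hf' hfz'
  replace he := (mem_filter.mp he).1
  replace he' := (mem_filter.mp he').1
  have hee' : e.left = e'.left := hleft.symm.trans hleft'
  exact hG.eq_of_left_eq_of_slope_eq he he' hee'
    (le_antisymm (hnext e' he' hee'.symm hslope') (hnext' e he hee' hslope))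

theorem card_le_three_mul_card_of_not_crosses (hG : IsGeometricGraph V E)
    (hplanar : ∀ e ∈ E, ∀ f ∈ E, ¬ e.Crosses f) : #E ≤ 3 * #V := by
  have hcover : E ⊆ {e ∈ E | e.IsLowestFromLeft E} ∪ {e ∈ E | ∃ z ∈ V, e.IsLowestAbove E z} ∪
      {e ∈ E | ∃ z ∈ V, ∃ f ∈ E, f.IsHighestBelow E z ∧ e.IsNextAbove E f} := by
    intro e he
    simpa only [mem_union, mem_filter, he, true_and, or_assoc] using hG.exists_charge hplanar he
  have hlowest := hG.card_isLowestFromLeft_le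
  have habove := Edge.card_isLowestAbove_le V hplanar
  have hbelow := hG.card_isNextAbove_isHighestBelow_le hplanar
  have := (card_le_card hcover).trans ((card_union_le _ _).trans
    (Nat.add_le_add_right (card_union_le _ _) _))
  omega

theorem card_le_three_mul_card_add_card_crossingPairs (hG : IsGeometricGraph V E) :
    #E ≤ 3 * #V + #(crossingPairs E) := by
  induction E using Finset.strongInduction with
  | H E ih =>
    by_cases hplanar : ∀ e ∈ E, ∀ f ∈ E, ¬ e.Crosses f
    · exact (hG.card_le_three_mul_card_of_not_crosses hplanar).trans (Nat.le_add_right _ _)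
    push Not at hplanar
    obtain ⟨e, he, f, hf, hcross⟩ := hplanar
    have hG' : IsGeometricGraph V (E.erase e) :=
      hG.mono Subset.rfl (erase_subset e E) fun g hg => hG.endpoints_subset (mem_of_mem_erase hg)
    have hfewer : #(crossingPairs (E.erase e)) < #(crossingPairs E) := by
      refine card_lt_card ((ssubset_iff_of_subset fun r hr => ?_).mpr ⟨(e, f), ?_, ?_⟩)
      · obtain ⟨h₁, h₂, h⟩ := mem_crossingPairs.mp hr
        exact mem_crossingPairs.mpr ⟨mem_of_mem_erase h₁, mem_of_mem_erase h₂, h⟩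
      · exact mem_crossingPairs.mpr ⟨he, hf, hcross⟩
      · simp [mem_crossingPairs]
    have := ih _ (erase_ssubset he) hG'
    have := card_erase_add_one he
    omega

lemma sum_weight_le (hG : IsGeometricGraph V E) {m : Edge → ℝ}
    (hm : ∀ e ∈ E, m e ∈ Set.Icc 0 1) :
    ∑ e ∈ E, m e ≤ 3 * #V + ∑ r ∈ crossingPairs E, m r.1 * m r.2 := by
  have sampled (S : Finset Edge) (hS : S ⊆ E) : (∑ e ∈ E with {e} ⊆ S, (1 : ℝ)) ≤
      3 * #V + ∑ r ∈ crossingPairs E with {r.1, r.2} ⊆ S, (1 : ℝ) := by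
    have hE : {e ∈ E | {e} ⊆ S} = S := by
      ext e; simpa using @hS e
    have hX : {r ∈ crossingPairs E | {r.1, r.2} ⊆ S} = crossingPairs S := by
      ext r
      simp only [mem_filter, mem_crossingPairs, insert_subset_iff, singleton_subset_iff]
      exact ⟨fun h => ⟨h.2.1, h.2.2, h.1.2.2⟩, fun h => ⟨⟨hS h.1, hS h.2.1, h.2.2⟩, h.1, h.2.1⟩⟩
    have hGS : IsGeometricGraph V S :=
      hG.mono Subset.rfl hS fun e he => hG.endpoints_subset (hS he)
    simp only [hE, hX, sum_const, nsmul_eq_mul, mul_one]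
    exact_mod_cast hGS.card_le_three_mul_card_add_card_crossingPairs
  have expected := subsetExpect_mono hm sampled
  rw [subsetExpect_add, subsetExpect_const,
    subsetExpect_sum_filter_subset (fun e he => singleton_subset_iff.mpr he),
    subsetExpect_sum_filter_subset] at expected
  · simp only [one_mul, prod_singleton] at expected
    refine expected.trans_eq (congrArg _ (sum_congr rfl fun r hr => ?_))
    exact prod_pair (mem_crossingPairs.mp hr).2.2.1
  · intro r hr
    obtain ⟨h₁, h₂, -⟩ := mem_crossingPairs.mp hr
    simp [insert_subset_iff, h₁, h₂]

lemma sq_mul_sum_weight_le (hG : IsGeometricGraph V E) {m : Edge → ℝ}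
    (hm : ∀ e ∈ E, m e ∈ Set.Icc 0 1) {p : ℝ} (hp : p ∈ Set.Icc 0 1) :
    p ^ 2 * ∑ e ∈ E, m e ≤ 3 * p * #V + p ^ 4 * ∑ r ∈ crossingPairs E, m r.1 * m r.2 := by
  have sampled (S : Finset (ℝ × ℝ)) (hS : S ⊆ V) : ∑ e ∈ E with e.endpoints ⊆ S, m e ≤
      (∑ v ∈ V with {v} ⊆ S, (3 : ℝ)) +
        ∑ r ∈ crossingPairs E with r.1.endpoints ∪ r.2.endpoints ⊆ S, m r.1 * m r.2 := by
    have hV : {v ∈ V | {v} ⊆ S} = S := by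
      ext v; simpa using @hS v
    have hX : {r ∈ crossingPairs E | r.1.endpoints ∪ r.2.endpoints ⊆ S} =
        crossingPairs {e ∈ E | e.endpoints ⊆ S} := by
      ext r
      simp only [mem_filter, mem_crossingPairs, union_subset_iff]
      tauto
    have hGS : IsGeometricGraph S {e ∈ E | e.endpoints ⊆ S} :=
      hG.mono hS (filter_subset _ _) fun e he => (mem_filter.mp he).2
    rw [hV, hX, sum_const, nsmul_eq_mul, mul_comm]
    exact hGS.sum_weight_le fun e he => hm e (mem_filter.mp he).1
  have expected := subsetExpect_mono (x := fun _ => p) (fun _ _ => hp) sampled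
  rw [subsetExpect_add, subsetExpect_sum_filter_subset (fun e he => hG.endpoints_subset he),
    subsetExpect_sum_filter_subset (fun v hv => singleton_subset_iff.mpr hv),
    subsetExpect_sum_filter_subset] at expected
  · have hcard (r) (hr : r ∈ crossingPairs E) : #(r.1.endpoints ∪ r.2.endpoints) = 4 := by
      obtain ⟨h₁, h₂, hcross⟩ := mem_crossingPairs.mp hr
      rw [card_union_of_disjoint (hG.disjoint_endpoints_of_crosses h₁ h₂ hcross),
        Edge.card_endpoints, Edge.card_endpoints]
    have hcrossing : ∑ r ∈ crossingPairs E, m r.1 * m r.2 * p ^ #(r.1.endpoints ∪ r.2.endpoints) =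
        (∑ r ∈ crossingPairs E, m r.1 * m r.2) * p ^ 4 := by
      rw [sum_mul]
      exact sum_congr rfl fun r hr => by rw [hcard r hr]
    simp only [prod_const, Edge.card_endpoints, card_singleton, pow_one, ← sum_mul, sum_const,
      nsmul_eq_mul, hcrossing] at expected
    linarith
  · intro r hr
    obtain ⟨h₁, h₂, -⟩ := mem_crossingPairs.mp hr
    exact union_subset (hG.endpoints_subset h₁) (hG.endpoints_subset h₂)

theorem sum_weight_pow_three_le (hG : IsGeometricGraph V E) {W : ℝ} (hW : 0 < W) {w : Edge → ℝ}
    (hw : ∀ e ∈ E, w e ∈ Set.Icc 0 W) (hdense : 6 * W * #V < ∑ e ∈ E, w e) :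
    (∑ e ∈ E, w e) ^ 3 ≤ 72 * W * #V ^ 2 * ∑ r ∈ crossingPairs E, w r.1 * w r.2 := by
  set S := ∑ e ∈ E, w e
  set X := ∑ r ∈ crossingPairs E, w r.1 * w r.2
  have hS : 0 < S := lt_of_le_of_lt (by positivity) hdense
  have hV : (0 : ℝ) < #V := by
    obtain ⟨e, he, -⟩ := exists_ne_zero_of_sum_ne_zero hS.ne'
    exact_mod_cast card_pos.mpr ⟨e.left, hG.left_mem e he⟩
  -- This probability makes the vertex term half of the edge term.
  set p := 6 * W * #V / S with hp
  have hp01 : p ∈ Set.Icc 0 1 := ⟨by positivity, (div_le_one hS).mpr hdense.le⟩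
  have hm : ∀ e ∈ E, w e / W ∈ Set.Icc 0 1 := fun e he =>
    ⟨div_nonneg (hw e he).1 hW.le, (div_le_one hW).mpr (hw e he).2⟩
  have key := hG.sq_mul_sum_weight_le hm hp01
  simp only [div_mul_div_comm, ← sum_div] at key
  change p ^ 2 * (S / W) ≤ 3 * p * #V + p ^ 4 * (X / (W * W)) at key
  have hedge : p ^ 2 * (S / W) = 36 * W * #V ^ 2 / S := by rw [hp]; field_simp; norm_num
  have hvertex : 3 * p * #V = 18 * W * #V ^ 2 / S := by rw [hp]; field_simp; norm_num
  have hcrossing : p ^ 4 * (X / (W * W)) =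
      18 * W * #V ^ 2 / S * (72 * W * #V ^ 2 * X / S ^ 3) := by rw [hp]; field_simp; ring
  rw [hedge, hvertex, hcrossing] at key
  have hscaled : 18 * W * #V ^ 2 / S * 1 ≤ 18 * W * #V ^ 2 / S * (72 * W * #V ^ 2 * X / S ^ 3) := by
    linear_combination key
  have := le_of_mul_le_mul_left hscaled (by positivity)
  rwa [one_le_div (by positivity)] at this

end IsGeometricGraph

section OmegaForm

variable {P : Finset (ℝ × ℝ)} {q p x y : ℝ × ℝ}

lemma omegaForm_self (q : ℝ × ℝ) : omegaForm q q = 0 := by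
  simp only [omegaForm]; ring

lemma omegaForm_mem_Tset (hq : q ∈ P) (hx : x ∈ P) (h : omegaForm q x ≠ 0) :
    omegaForm q x ∈ Tset P :=
  mem_erase.mpr ⟨h, mem_image.mpr ⟨(q, x), mem_product.mpr ⟨hq, hx⟩, rfl⟩⟩

lemma Tset_image {φ : ℝ × ℝ → ℝ × ℝ} (hφ : ∀ a b, omegaForm (φ a) (φ b) = omegaForm a b) :
    Tset (P.image φ) = Tset P := by
  simp only [Tset, ← prodMap_image_product, image_image]
  simp only [Function.comp_def, Prod.map_fst, Prod.map_snd, hφ]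

lemma eq_of_omegaForm_eq (hqp : omegaForm q p ≠ 0) (hq : omegaForm q x = omegaForm q y)
    (hp : omegaForm p x = omegaForm p y) : x = y := by
  simp only [omegaForm] at hqp hq hp
  refine Prod.ext (mul_left_cancel₀ hqp ?_) (mul_left_cancel₀ hqp ?_)
  · linear_combination p.1 * hq - q.1 * hp
  · linear_combination p.2 * hq - q.2 * hp

lemma exists_eq_smul_of_omegaForm_eq_zero (hq : q ≠ 0) (h : omegaForm q p = 0) :
    ∃ t : ℝ, p = t • q := by
  have hnorm : q.1 * q.1 + q.2 * q.2 ≠ 0 := fun h0 =>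
    hq (Prod.ext_iff.mpr (mul_self_add_mul_self_eq_zero.mp h0))
  refine ⟨(q.1 * p.1 + q.2 * p.2) / (q.1 * q.1 + q.2 * q.2), ?_⟩
  simp only [omegaForm] at h
  ext
  · simp only [Prod.smul_fst, smul_eq_mul]
    rw [div_mul_eq_mul_div, eq_div_iff hnorm]
    linear_combination -q.2 * h
  · simp only [Prod.smul_snd, smul_eq_mul]
    rw [div_mul_eq_mul_div, eq_div_iff hnorm]
    linear_combination q.1 * h

lemma card_omegaForm_eq_zero_le_card_Tset (hP : ∀ x ∈ P, x ≠ 0) (hp : p ∈ P)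
    (hqp : omegaForm q p ≠ 0) : #{x ∈ P | omegaForm q x = 0} ≤ #(Tset P) := by
  refine card_le_card_of_injOn (omegaForm p) (fun x hx => ?_) fun x hx y hy hxy => ?_
  · obtain ⟨hxP, hqx⟩ := mem_filter.mp hx
    refine omegaForm_mem_Tset hp hxP fun hpx => hP x hxP ?_
    exact eq_of_omegaForm_eq hqp (by simpa [omegaForm] using hqx) (by simpa [omegaForm] using hpx)
  · exact eq_of_omegaForm_eq hqp ((mem_filter.mp hx).2.trans (mem_filter.mp hy).2.symm) hxy

end OmegaForm

section ConsecutiveEdges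

variable {P : Finset (ℝ × ℝ)} {e f : Edge} {q q' x : ℝ × ℝ}

lemma injective_left_right : Function.Injective fun e : Edge => (e.left, e.right) :=
  fun _ _ h => Edge.ext (congrArg Prod.fst h) (congrArg Prod.snd h)

/-- The segments with endpoints in `P` and no point of `P` in their relative interior. -/
noncomputable def consecutiveEdges (P : Finset (ℝ × ℝ)) : Finset Edge :=
  {e ∈ (P ×ˢ P).preimage (fun e : Edge => (e.left, e.right)) injective_left_right.injOn |
    ∀ v ∈ P, v.1 ∈ e.span → v.2 ≠ e.height v.1}

/-- The points `q` of `P` for which `e` lies on a line `ω(q, ·) = t` with `t ≠ 0`. -/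
noncomputable def witnesses (P : Finset (ℝ × ℝ)) (e : Edge) : Finset (ℝ × ℝ) :=
  {q ∈ P | omegaForm q e.left = omegaForm q e.right ∧ omegaForm q e.left ≠ 0}

lemma mem_consecutiveEdges : e ∈ consecutiveEdges P ↔
    (e.left ∈ P ∧ e.right ∈ P) ∧ ∀ v ∈ P, v.1 ∈ e.span → v.2 ≠ e.height v.1 := by
  simp [consecutiveEdges]

lemma mem_witnesses : q ∈ witnesses P e ↔
    q ∈ P ∧ omegaForm q e.left = omegaForm q e.right ∧ omegaForm q e.left ≠ 0 :=
  mem_filter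

lemma isGeometricGraph_consecutiveEdges (hP : Set.InjOn Prod.fst (P : Set (ℝ × ℝ))) :
    IsGeometricGraph P (consecutiveEdges P) where
  injOn_fst := hP
  left_mem _ he := (mem_consecutiveEdges.mp he).1.1
  right_mem _ he := (mem_consecutiveEdges.mp he).1.2
  snd_ne_height _ he := (mem_consecutiveEdges.mp he).2

lemma fst_mul_slope_eq_snd (h : omegaForm q e.left = omegaForm q e.right) :
    q.1 * e.slope = q.2 := by
  refine mul_right_cancel₀ (sub_pos.mpr e.left_lt_right).ne' ?_
  simp only [omegaForm] at h
  linear_combination q.1 * e.slope_mul_width - h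

lemma omegaForm_height (h : omegaForm q e.left = omegaForm q e.right) (x : ℝ) :
    omegaForm q (x, e.height x) = omegaForm q e.left := by
  simp only [omegaForm, Edge.height]
  linear_combination (x - e.left.1) * fst_mul_slope_eq_snd h

lemma fst_ne_zero_of_mem_witnesses (hq : q ∈ witnesses P e) : q.1 ≠ 0 := by
  obtain ⟨-, hlevel, hne⟩ := mem_witnesses.mp hq
  intro hfst
  have hsnd := fst_mul_slope_eq_snd hlevel
  exact hne (by simp [omegaForm, ← hsnd, hfst])

lemma height_eq_of_mem_witnesses (he : q ∈ witnesses P e) (hf : q ∈ witnesses P f)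
    (hef : omegaForm q e.left = omegaForm q f.left) : e.height = f.height := by
  funext x
  have hlevel : omegaForm q (x, e.height x) = omegaForm q (x, f.height x) := by
    rw [omegaForm_height (mem_witnesses.mp he).2.1, omegaForm_height (mem_witnesses.mp hf).2.1, hef]
  exact mul_left_cancel₀ (fst_ne_zero_of_mem_witnesses he) (sub_left_injective hlevel)

lemma omegaForm_eq_zero_of_mem_witnesses (hq : q ∈ witnesses P e) (hq' : q' ∈ witnesses P e) :
    omegaForm q q' = 0 := by
  rw [omegaForm, ← fst_mul_slope_eq_snd (mem_witnesses.mp hq).2.1,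
    ← fst_mul_slope_eq_snd (mem_witnesses.mp hq').2.1]
  ring

lemma card_witnesses_le {W : ℝ} (hW : 0 ≤ W)
    (hline : ∀ q ∈ P, (#{x ∈ P | omegaForm q x = 0} : ℝ) ≤ W) (e : Edge) :
    (#(witnesses P e) : ℝ) ≤ W := by
  rcases (witnesses P e).eq_empty_or_nonempty with h | ⟨q, hq⟩
  · simpa [h] using hW
  · refine le_trans (Nat.cast_le.mpr (card_le_card fun q' hq' => ?_))
      (hline q (mem_witnesses.mp hq).1)
    exact mem_filter.mpr ⟨(mem_witnesses.mp hq').1, omegaForm_eq_zero_of_mem_witnesses hq hq'⟩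

lemma exists_consecutiveEdge_of_level (hq : q ∈ P) (hx : x ∈ P) (hqx : omegaForm q x ≠ 0)
    (hright : ∃ y ∈ P, x.1 < y.1 ∧ omegaForm q y = omegaForm q x) :
    ∃ e ∈ consecutiveEdges P, q ∈ witnesses P e ∧ e.left = x := by
  obtain ⟨y, hy, hmin⟩ := exists_min_image {y ∈ P | x.1 < y.1 ∧ omegaForm q y = omegaForm q x}
    Prod.fst (by simpa [Finset.Nonempty] using hright)
  obtain ⟨hyP, hxy, hlevel⟩ := mem_filter.mp hy
  let e : Edge := ⟨x, y, hxy⟩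
  refine ⟨e, mem_consecutiveEdges.mpr ⟨⟨hx, hyP⟩, fun v hv hve hvline => ?_⟩,
    mem_witnesses.mpr ⟨hq, hlevel.symm, hqx⟩, rfl⟩
  have hvlevel : omegaForm q v = omegaForm q x := by
    rw [← omegaForm_height (e := e) hlevel.symm v.1, ← hvline]
  exact (hmin v (mem_filter.mpr ⟨hv, hve.1, hvlevel⟩)).not_gt hve.2

lemma card_omegaForm_ne_zero_le (hP : Set.InjOn Prod.fst (P : Set (ℝ × ℝ))) (hq : q ∈ P) :
    #{x ∈ P | omegaForm q x ≠ 0} ≤ #{e ∈ consecutiveEdges P | q ∈ witnesses P e} + #(Tset P) := by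
  let hasNext (x : ℝ × ℝ) : Prop := ∃ y ∈ P, x.1 < y.1 ∧ omegaForm q y = omegaForm q x
  rw [← card_filter_add_card_filter_not hasNext]
  refine Nat.add_le_add ?_ ?_
  · refine le_trans (card_le_card fun x hx => ?_) (card_image_le (f := Edge.left))
    obtain ⟨hx, hnext⟩ := mem_filter.mp hx
    obtain ⟨hxP, hqx⟩ := mem_filter.mp hx
    obtain ⟨e, he, hqe, hleft⟩ := exists_consecutiveEdge_of_level hq hxP hqx hnext
    exact mem_image.mpr ⟨e, mem_filter.mpr ⟨he, hqe⟩, hleft⟩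
  · refine card_le_card_of_injOn (omegaForm q) (fun x hx => ?_) fun x hx y hy hxy => ?_
    · obtain ⟨hxP, hqx⟩ := mem_filter.mp (mem_filter.mp hx).1
      exact omegaForm_mem_Tset hq hxP hqx
    · obtain ⟨hx, hxlast⟩ := mem_filter.mp hx
      obtain ⟨hy, hylast⟩ := mem_filter.mp hy
      have hxP := (mem_filter.mp hx).1
      have hyP := (mem_filter.mp hy).1
      refine hP hxP hyP (le_antisymm ?_ ?_)
      · exact not_lt.mp fun hlt => hylast ⟨x, hxP, hlt, hxy⟩
      · exact not_lt.mp fun hlt => hxlast ⟨y, hyP, hlt, hxy.symm⟩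

lemma sum_card_witnesses_eq : ∑ e ∈ consecutiveEdges P, #(witnesses P e) =
    ∑ q ∈ P, #{e ∈ consecutiveEdges P | q ∈ witnesses P e} := by
  refine Eq.trans ?_ (sum_card_bipartiteAbove_eq_sum_card_bipartiteBelow
    (s := consecutiveEdges P) (t := P) fun e q => q ∈ witnesses P e)
  refine sum_congr rfl fun e _ => congrArg card ?_
  exact (filter_mem_eq_inter.trans (inter_eq_right.mpr (filter_subset _ _))).symm

lemma card_mul_le_sum_card_witnesses (hP : Set.InjOn Prod.fst (P : Set (ℝ × ℝ))) {W : ℝ}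
    (hline : ∀ q ∈ P, (#{x ∈ P | omegaForm q x = 0} : ℝ) ≤ W) :
    #P * (#P - #(Tset P) - W) ≤ ∑ e ∈ consecutiveEdges P, (#(witnesses P e) : ℝ) := by
  have hdegree (q) (hq : q ∈ P) :
      #P - #(Tset P) - W ≤ (#{e ∈ consecutiveEdges P | q ∈ witnesses P e} : ℝ) := by
    have hsplit : (#{x ∈ P | omegaForm q x = 0} : ℝ) + #{x ∈ P | omegaForm q x ≠ 0} = #P := by
      exact_mod_cast card_filter_add_card_filter_not (s := P) fun x => omegaForm q x = 0
    have hoff : (#{x ∈ P | omegaForm q x ≠ 0} : ℝ) ≤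
        #{e ∈ consecutiveEdges P | q ∈ witnesses P e} + #(Tset P) := by
      exact_mod_cast card_omegaForm_ne_zero_le hP hq
    linarith [hline q hq]
  rw [← nsmul_eq_mul, ← Nat.cast_sum, sum_card_witnesses_eq, Nat.cast_sum]
  exact card_nsmul_le_sum P _ _ hdegree

/- The crossing edges `e`, `f` with witnesses `q`, `q'` are recovered from `q`, `q'` and the levels
`ω(q, e)`, `ω(q', f)`: these determine the two supporting lines, hence the crossing point. -/
lemma sum_crossingPairs_card_witnesses_le (hP : Set.InjOn Prod.fst (P : Set (ℝ × ℝ))) :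
    ∑ r ∈ crossingPairs (consecutiveEdges P), #(witnesses P r.1) * #(witnesses P r.2) ≤
      (#P * #(Tset P)) ^ 2 := by
  have hG := isGeometricGraph_consecutiveEdges hP
  calc ∑ r ∈ crossingPairs (consecutiveEdges P), #(witnesses P r.1) * #(witnesses P r.2)
      = #((crossingPairs (consecutiveEdges P)).sigma
          fun r => witnesses P r.1 ×ˢ witnesses P r.2) := by simp only [card_sigma, card_product]
    _ ≤ #((P ×ˢ P) ×ˢ (Tset P ×ˢ Tset P)) := ?_
    _ = (#P * #(Tset P)) ^ 2 := by simp only [card_product]; ring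
  refine card_le_card_of_injOn
    (fun s => (s.2, (omegaForm s.2.1 s.1.1.left, omegaForm s.2.2 s.1.2.left))) ?_ ?_
  · rintro ⟨⟨e, f⟩, q, q'⟩ hs
    simp only [mem_coe, mem_sigma, mem_product, mem_crossingPairs] at hs ⊢
    obtain ⟨⟨he, hf, -⟩, hq, hq'⟩ := hs
    obtain ⟨hqP, -, hqe⟩ := mem_witnesses.mp hq
    obtain ⟨hqP', -, hqf⟩ := mem_witnesses.mp hq'
    exact ⟨⟨hqP, hqP'⟩, omegaForm_mem_Tset hqP (hG.left_mem e he) hqe,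
      omegaForm_mem_Tset hqP' (hG.left_mem f hf) hqf⟩
  · rintro ⟨⟨e, f⟩, q, q'⟩ hs ⟨⟨e', f'⟩, k, k'⟩ hs' heq
    simp only [mem_coe, mem_sigma, mem_product, mem_crossingPairs] at hs hs'
    simp only [Prod.mk.injEq] at heq
    obtain ⟨⟨rfl, rfl⟩, hlevel, hlevel'⟩ := heq
    obtain ⟨⟨he, hf, hcross⟩, hqe, hqf⟩ := hs
    obtain ⟨⟨he', hf', hcross'⟩, hqe', hqf'⟩ := hs'
    obtain ⟨rfl, rfl⟩ := hG.eq_and_eq_of_crosses he hf he' hf' hcross hcross'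
      (height_eq_of_mem_witnesses hqe hqe' hlevel) (height_eq_of_mem_witnesses hqf hqf' hlevel')
    rfl

end ConsecutiveEdges

section CardBound

variable {P : Finset (ℝ × ℝ)} {W : ℝ}

lemma card_sq_le_of_injOn_fst (hP : Set.InjOn Prod.fst (P : Set (ℝ × ℝ)))
    (hline : ∀ q ∈ P, (#{x ∈ P | omegaForm q x = 0} : ℝ) ≤ W) (hWT : W ≤ #(Tset P)) :
    (#P : ℝ) ^ 2 ≤ 576 * W * #(Tset P) ^ 2 := by
  rcases P.eq_empty_or_nonempty with rfl | ⟨q, hq⟩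
  · simp [Tset]
  have hW : 1 ≤ W := le_trans (Nat.one_le_cast.mpr (card_pos.mpr
    ⟨q, mem_filter.mpr ⟨hq, omegaForm_self q⟩⟩)) (hline q hq)
  have hN : (0 : ℝ) < #P := by exact_mod_cast card_pos.mpr ⟨q, hq⟩
  have hedges := card_mul_le_sum_card_witnesses hP hline
  have hcrossings : ∑ r ∈ crossingPairs (consecutiveEdges P),
      (#(witnesses P r.1) : ℝ) * #(witnesses P r.2) ≤ (#P * #(Tset P)) ^ 2 := by
    exact_mod_cast sum_crossingPairs_card_witnesses_le hP
  set N : ℝ := (#P : ℝ)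
  set T : ℝ := (#(Tset P) : ℝ)
  set S := ∑ e ∈ consecutiveEdges P, (#(witnesses P e) : ℝ)
  rcases le_or_gt N (12 * T) with hsmall | hlarge
  · calc N ^ 2 ≤ (12 * T) ^ 2 := by gcongr
      _ ≤ 576 * W * T ^ 2 := by nlinarith [sq_nonneg T]
  have hhalf : N ^ 2 / 2 ≤ S := by nlinarith
  have hdense : 6 * W * N < S := by nlinarith
  have hcrossing := (isGeometricGraph_consecutiveEdges hP).sum_weight_pow_three_le
    (by linarith) (fun e _ => ⟨Nat.cast_nonneg _, card_witnesses_le (by linarith) hline e⟩) hdense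
  have hcube : N ^ 4 / 8 * N ^ 2 ≤ N ^ 4 / 8 * (576 * W * T ^ 2) :=
    calc N ^ 4 / 8 * N ^ 2 = (N ^ 2 / 2) ^ 3 := by ring
      _ ≤ S ^ 3 := by gcongr
      _ ≤ _ := hcrossing
      _ ≤ 72 * W * N ^ 2 * (N * T) ^ 2 := by gcongr
      _ = N ^ 4 / 8 * (576 * W * T ^ 2) := by ring
  exact le_of_mul_le_mul_left hcube (by positivity)

/-- The shear of the plane along the first axis; it preserves `ω`. -/
def shear (s : ℝ) (a : ℝ × ℝ) : ℝ × ℝ := (a.1 + s * a.2, a.2)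

lemma omegaForm_shear (s : ℝ) (a b : ℝ × ℝ) :
    omegaForm (shear s a) (shear s b) = omegaForm a b := by
  simp only [omegaForm, shear]; ring

lemma shear_injective (s : ℝ) : Function.Injective (shear s) := by
  intro a b h
  simp only [shear, Prod.mk.injEq] at h
  obtain ⟨hfst, hsnd⟩ := h
  exact Prod.ext (by simpa [hsnd] using hfst) hsnd

lemma exists_shear_injOn_fst (P : Finset (ℝ × ℝ)) :
    ∃ s : ℝ, Set.InjOn Prod.fst (P.image (shear s) : Set (ℝ × ℝ)) := by
  obtain ⟨s, hs⟩ := Infinite.exists_notMem_finset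
    ((P ×ˢ P).image fun r => (r.2.1 - r.1.1) / (r.1.2 - r.2.2))
  refine ⟨s, ?_⟩
  rw [coe_image]
  rintro _ ⟨a, ha, rfl⟩ _ ⟨b, hb, rfl⟩ hab
  simp only [shear] at hab
  by_cases hsnd : a.2 = b.2
  · rw [Prod.ext (by simpa [hsnd] using hab) hsnd]
  · refine absurd (mem_image.mpr ⟨(a, b), mem_product.mpr ⟨ha, hb⟩, ?_⟩) hs
    rw [div_eq_iff (sub_ne_zero.mpr hsnd)]
    linear_combination -hab

theorem card_sq_le_mul_card_Tset_sq
    (hline : ∀ q ∈ P, (#{x ∈ P | omegaForm q x = 0} : ℝ) ≤ W) (hWT : W ≤ #(Tset P)) :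
    (#P : ℝ) ^ 2 ≤ 576 * W * #(Tset P) ^ 2 := by
  obtain ⟨s, hs⟩ := exists_shear_injOn_fst P
  have hT : Tset (P.image (shear s)) = Tset P := Tset_image (omegaForm_shear s)
  rw [← card_image_of_injective P (shear_injective s), ← hT]
  refine card_sq_le_of_injOn_fst hs (forall_mem_image.mpr fun q hq => ?_) (hT ▸ hWT)
  rw [filter_image, card_image_of_injective _ (shear_injective s)]
  simpa only [omegaForm_shear] using hline q hq

end CardBound

lemma mul_rpow_neg_half_le_of_sq_le {c a b w : ℝ} (hc : 0 < c) (hb : 0 ≤ b) (hw : 0 < w)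
    (h : a ^ 2 ≤ c ^ 2 * w * b ^ 2) : 1 / c * a * w ^ (-(1 : ℝ) / 2) ≤ b := by
  have hsqrt : w ^ (-(1 : ℝ) / 2) = (√w)⁻¹ := by
    rw [Real.sqrt_eq_rpow, ← Real.rpow_neg hw.le, neg_div]
  have ha : a ≤ b * (c * √w) := by
    refine le_of_sq_le_sq (h.trans_eq ?_) (by positivity)
    rw [mul_pow, mul_pow, Real.sq_sqrt hw.le]; ring
  rw [hsqrt, one_div_mul_eq_div, ← div_eq_mul_inv, div_div]
  exact (div_le_iff₀ (by positivity)).mpr ha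

theorem stmt_8 :
    ∃ c : ℝ, 0 < c ∧
      ∀ (w₀ : ℝ) (P : Finset (ℝ × ℝ)),
        1 ≤ w₀ →
        (∀ p ∈ P, p ≠ (0 : ℝ × ℝ)) →
        (∀ u : ℝ × ℝ, u ≠ 0 →
          (((P.filter fun p => ∃ t : ℝ, p = t • u).card : ℝ) ≤ w₀)) →
        (¬ ∃ u : ℝ × ℝ, u ≠ 0 ∧ ∀ p ∈ P, ∃ t : ℝ, p = t • u) →
        c * (P.card : ℝ) * w₀ ^ (-(1 : ℝ) / 2) ≤ ((Tset P).card : ℝ) := by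
  refine ⟨1 / 24, by norm_num, fun w₀ P hw hP0 hrich hspan => ?_⟩
  have hline (q) (hq : q ∈ P) : (#{x ∈ P | omegaForm q x = 0} : ℝ) ≤ min w₀ #(Tset P) := by
    refine le_min (le_trans (Nat.cast_le.mpr (card_le_card ?_)) (hrich q (hP0 q hq))) ?_
    · exact monotone_filter_right P fun x _ => exists_eq_smul_of_omegaForm_eq_zero (hP0 q hq)
    · obtain ⟨p, hp, hqp⟩ : ∃ p ∈ P, omegaForm q p ≠ 0 := by
        by_contra! hcollinear
        exact hspan ⟨q, hP0 q hq,
          fun p hp => exists_eq_smul_of_omegaForm_eq_zero (hP0 q hq) (hcollinear p hp)⟩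
      exact_mod_cast card_omegaForm_eq_zero_le_card_Tset hP0 hp hqp
  refine mul_rpow_neg_half_le_of_sq_le (by norm_num) (Nat.cast_nonneg _) (by linarith) ?_
  calc (#P : ℝ) ^ 2 ≤ 576 * min w₀ #(Tset P) * #(Tset P) ^ 2 :=
        card_sq_le_mul_card_Tset_sq hline (min_le_right _ _)
    _ ≤ 576 * w₀ * #(Tset P) ^ 2 := by gcongr; exact min_le_left _ _
    _ = 24 ^ 2 * w₀ * #(Tset P) ^ 2 := by norm_num
end

section
/- There exists an absolute constant c > 0 such that the following holds. Let w₀ ≥ 1 and let P be a finite set of N points in ℝ² \ {0} such that every line through the origin that intersects P contains at least w₀ points of P, and such that the points of P are supported on at least four distinct lines through the origin. Then |T(P)| ≥ c·(N·w₀)^(3/7). -/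
open Finset
open scoped Classical

/-!
Write `ωᵢⱼ` for the values of `ω` on four points of `P` lying on distinct lines through the origin.
They satisfy the Plücker relation `ω₀₁ω₂₃ - ω₀₂ω₁₃ + ω₀₃ω₁₂ = 0`, and `ω₀₁ω₂₃ / (ω₀₂ω₁₃)` is the
cross ratio of the four slopes. Given the slopes, the six values determine the points up to sign.
So if the lines with slopes in `S` contain at least `v` points of `P` each, then `v ^ 4` times the
number of cross ratios of `S` is at most twice the number of solutions of the Plücker relation in
`T(P)`.

* The number of solutions is `O(|T(P)| ^ (14 / 3))`: once four of the `ωᵢⱼ` are fixed, the other two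
  give a point of the grid `T(P) × T(P)` on a line. Cut the grid into products of intervals.
  A line is monotone, hence meets few of these cells; and in a given cell it either has at most one
  point or is determined by a pair of points, up to the choice of `ω₀₃` and `ω₁₂`.
* The set `S` has at least a constant times `|S| ^ 2` cross ratios if `|S| ≥ 4`: two quadruples
  have the same cross ratio only if a Möbius transformation takes one to the other. Graphs of
  Möbius transformations are piecewise monotone and determined by three points, so the same cell
  argument bounds the number of those with many points in `S × S`, and with it the number of such
  coincidences.

Hence `|S| * v ^ 2 = O(|T(P)| ^ (7 / 3))` for every `v`, and summing over `v ≥ w₀` bounds `N * w₀`.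
-/

section Counting

variable {α β ι : Type*}

lemma le_add_choose_succ (d n : ℕ) : n ≤ d + n.choose (d + 1) := by
  induction n with
  | zero => exact Nat.zero_le _
  | succ n ih =>
    rcases le_or_gt (n + 1) d with h | h
    · omega
    · have : 0 < n.choose d := Nat.choose_pos (by omega)
      rw [Nat.choose_succ_succ']
      omega

/-- The `n`-element subsets of `G` on which the colouring `c` is constant. -/
def monochromaticSubsets [DecidableEq β] (c : α → β) (n : ℕ) (G : Finset α) : Finset (Finset α) :=
  {A ∈ G.powersetCard n | ∀ x ∈ A, ∀ y ∈ A, c x = c y}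

variable [DecidableEq β] (c : α → β)

lemma mem_monochromaticSubsets {n : ℕ} {G A : Finset α} :
    A ∈ monochromaticSubsets c n G ↔ (A ⊆ G ∧ #A = n) ∧ ∀ x ∈ A, ∀ y ∈ A, c x = c y := by
  rw [monochromaticSubsets, mem_filter, mem_powersetCard]

lemma card_monochromaticSubsets_succ (d : ℕ) (G : Finset α) :
    #(monochromaticSubsets c (d + 1) G) =
      ∑ b ∈ G.image c, (#{x ∈ G | c x = b}).choose (d + 1) := by
  have h_eq : monochromaticSubsets c (d + 1) G =
      (G.image c).biUnion fun b => {x ∈ G | c x = b}.powersetCard (d + 1) := by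
    ext A
    simp only [mem_monochromaticSubsets, mem_biUnion, mem_powersetCard]
    constructor
    · rintro ⟨⟨hAG, hA⟩, hc⟩
      obtain ⟨x, hx⟩ : A.Nonempty := card_pos.1 (by omega)
      exact ⟨c x, mem_image_of_mem c (hAG hx),
        fun y hy => mem_filter.2 ⟨hAG hy, hc y hy x hx⟩, hA⟩
    · rintro ⟨b, -, hAb, hA⟩
      have hmem : ∀ x ∈ A, x ∈ G ∧ c x = b := fun x hx => mem_filter.1 (hAb hx)
      exact ⟨⟨fun x hx => (hmem x hx).1, hA⟩,
        fun x hx y hy => (hmem x hx).2.trans (hmem y hy).2.symm⟩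
  rw [h_eq, card_biUnion]
  · simp only [card_powersetCard]
  · intro b _ b' _ hne
    refine disjoint_left.2 fun A hA hA' => hne ?_
    rw [mem_powersetCard] at hA hA'
    obtain ⟨x, hx⟩ : A.Nonempty := card_pos.1 (by omega)
    exact (mem_filter.1 (hA.1 hx)).2.symm.trans (mem_filter.1 (hA'.1 hx)).2

lemma card_le_mul_card_image_add_card_monochromaticSubsets (d : ℕ) (G : Finset α) :
    #G ≤ d * #(G.image c) + #(monochromaticSubsets c (d + 1) G) := by
  rw [card_monochromaticSubsets_succ, card_eq_sum_card_image c G]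
  calc ∑ b ∈ G.image c, #{x ∈ G | c x = b}
      ≤ ∑ b ∈ G.image c, (d + (#{x ∈ G | c x = b}).choose (d + 1)) :=
        sum_le_sum fun b _ => le_add_choose_succ d _
    _ = d * #(G.image c) + ∑ b ∈ G.image c, (#{x ∈ G | c x = b}).choose (d + 1) := by
        rw [sum_add_distrib, sum_const, smul_eq_mul, mul_comm]

lemma card_monochromaticSubsets_succ_le {G : Finset α} {m : ℕ} (hm : ∀ b, #{x ∈ G | c x = b} ≤ m)
    (d : ℕ) : #(monochromaticSubsets c (d + 1) G) ≤ #G * m ^ d := by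
  rw [card_monochromaticSubsets_succ]
  calc ∑ b ∈ G.image c, (#{x ∈ G | c x = b}).choose (d + 1)
      ≤ ∑ b ∈ G.image c, #{x ∈ G | c x = b} * m ^ d := by
        refine sum_le_sum fun b _ => (Nat.choose_le_pow _ _).trans ?_
        rw [pow_succ']
        gcongr
        exact hm b
    _ = #G * m ^ d := by rw [← sum_mul, ← card_eq_sum_card_image]

/-- Incidence bound by cell decomposition: the colour classes of `c` are the cells. In each cell a
curve either has at most `d` points or contains a `(d + 1)`-subset of that cell. -/
theorem sum_card_le_of_cells [DecidableEq α] {I : Finset ι} {Γ : ι → Finset α} {G : Finset α}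
    {d M N m : ℕ} (hΓ : ∀ i ∈ I, Γ i ⊆ G) (hN : ∀ i ∈ I, #((Γ i).image c) ≤ N)
    (hm : ∀ b, #{x ∈ G | c x = b} ≤ m)
    (hM : ∀ A : Finset α, #A = d + 1 → #{i ∈ I | A ⊆ Γ i} ≤ M) :
    ∑ i ∈ I, #(Γ i) ≤ #I * (d * N) + #G * m ^ d * M := by
  set L := monochromaticSubsets c (d + 1) G
  have h_curve : ∀ i ∈ I, #(Γ i) ≤ d * N + #{A ∈ L | A ⊆ Γ i} := fun i hi => by
    refine (card_le_mul_card_image_add_card_monochromaticSubsets c d (Γ i)).trans ?_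
    gcongr
    · exact hN i hi
    · intro A hA
      rw [mem_monochromaticSubsets] at hA
      exact mem_filter.2
        ⟨(mem_monochromaticSubsets c).2 ⟨⟨hA.1.1.trans (hΓ i hi), hA.1.2⟩, hA.2⟩, hA.1.1⟩
  have h_double : ∑ i ∈ I, #{A ∈ L | A ⊆ Γ i} ≤ #L * M :=
    calc ∑ i ∈ I, #{A ∈ L | A ⊆ Γ i} = ∑ A ∈ L, #{i ∈ I | A ⊆ Γ i} :=
          sum_card_bipartiteAbove_eq_sum_card_bipartiteBelow fun i A => A ⊆ Γ i
      _ ≤ #L • M := sum_le_card_nsmul _ _ _ fun A hA =>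
          hM A ((mem_monochromaticSubsets c).1 hA).1.2
  calc ∑ i ∈ I, #(Γ i) ≤ ∑ i ∈ I, (d * N + #{A ∈ L | A ⊆ Γ i}) := sum_le_sum h_curve
    _ ≤ #I * (d * N) + #L * M := by
        rw [sum_add_distrib, sum_const, smul_eq_mul]
        gcongr
    _ ≤ #I * (d * N) + #G * m ^ d * M := by
        gcongr
        exact card_monochromaticSubsets_succ_le c hm d

lemma sq_card_le_card_image_mul_card_collisions (Q : Finset α) :
    #Q ^ 2 ≤ #(Q.image c) * #{z ∈ Q ×ˢ Q | c z.1 = c z.2} := by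
  have h_collisions : #{z ∈ Q ×ˢ Q | c z.1 = c z.2} =
      ∑ b ∈ Q.image c, #{x ∈ Q | c x = b} ^ 2 := by
    rw [card_eq_sum_card_fiberwise (f := fun z : α × α => c z.1) (t := Q.image c)
      fun z hz => mem_image_of_mem c (mem_product.1 (mem_filter.1 hz).1).1]
    refine sum_congr rfl fun b _ => ?_
    rw [sq, ← card_product]
    congr 1
    ext z
    simp only [mem_filter, mem_product]
    grind
  rw [h_collisions, card_eq_sum_card_image c Q]
  exact sq_sum_le_card_mul_sum_sq

/-- Summation by layers against the convergent series `∑ 1 / v ^ 2`. -/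
lemma sum_sum_Ioc_le {I : Finset ι} {f : ι → ℕ} {g : ℕ → ℝ} {A : ℝ} {w : ℕ} (hA : 0 ≤ A)
    (h : ∀ v, w < v → #{i ∈ I | v ≤ f i} * g v * v ^ 2 ≤ A) :
    ∑ i ∈ I, ∑ v ∈ Ioc w (f i), g v ≤ A * (2 / (w + 1)) := by
  set M := I.sup f
  calc ∑ i ∈ I, ∑ v ∈ Ioc w (f i), g v
      = ∑ v ∈ Ioo w (M + 1), ∑ i ∈ I with v ≤ f i, g v := by
        refine sum_comm' fun i v => ?_
        have hM : i ∈ I → f i ≤ M := fun hi => le_sup hi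
        simp only [mem_Ioc, mem_Ioo, mem_filter]
        grind
    _ ≤ ∑ v ∈ Ioo w (M + 1), A * ((v : ℝ) ^ 2)⁻¹ := by
        refine sum_le_sum fun v hv => ?_
        have hv0 : (0 : ℝ) < v := by exact_mod_cast (Nat.zero_le w).trans_lt (mem_Ioo.1 hv).1
        rw [sum_const, nsmul_eq_mul, ← div_eq_mul_inv, le_div_iff₀ (by positivity)]
        exact h v (mem_Ioo.1 hv).1
    _ ≤ A * (2 / (w + 1)) := by
        rw [← mul_sum]
        gcongr
        exact sum_Ioo_inv_sq_le w (M + 1)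

end Counting

section MonotoneColorings

lemma strictMonoOn_card_filter_lt {α : Type*} [LinearOrder α] (S : Finset α) :
    StrictMonoOn (fun x => #{z ∈ S | z < x}) (S : Set α) := fun x hx y _ hxy => by
  refine card_lt_card ⟨monotone_filter_right S fun z _ hz => hz.trans hxy, fun h => ?_⟩
  exact lt_irrefl x (mem_filter.1 (h (mem_filter.2 ⟨hx, hxy⟩))).2

theorem exists_monotone_coloring {α : Type*} [LinearOrder α] (S : Finset α) {s : ℕ} (hs : 0 < s)
    (hsS : s ≤ #S) :
    ∃ (f : α → ℕ) (m : ℕ), Monotone f ∧ (∀ x ∈ S, f x < s) ∧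
      (∀ j, #{x ∈ S | f x = j} ≤ m) ∧ m * s ≤ 2 * #S := by
  set m := (#S + s - 1) / s with hm
  have hm_upper : m * s ≤ #S + s - 1 := Nat.div_mul_le_self _ _
  have hm_lower : #S ≤ m * s := by
    have := Nat.lt_mul_div_succ (#S + s - 1) hs
    rw [← hm, mul_comm, add_mul] at this
    omega
  have hm_pos : 0 < m := Nat.pos_of_ne_zero fun h => by simp only [h] at hm_lower; omega
  set rank : α → ℕ := fun x => #{y ∈ S | y < x}
  refine ⟨fun x => rank x / m, m, fun x y hxy => ?_, fun x hx => ?_, fun j => ?_, by omega⟩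
  · exact Nat.div_le_div_right
      (card_le_card (monotone_filter_right S fun z _ hz => hz.trans_le hxy))
  · have h_lt : rank x < #S := card_lt_card (filter_ssubset.2 ⟨x, hx, lt_irrefl x⟩)
    rw [Nat.div_lt_iff_lt_mul hm_pos, mul_comm]
    omega
  · calc #{x ∈ S | rank x / m = j} ≤ #(Ico (j * m) ((j + 1) * m)) := by
          refine card_le_card_of_injOn rank (fun x hx => ?_)
            ((strictMonoOn_card_filter_lt S).injOn.mono (filter_subset _ S))
          have hj := (mem_filter.1 hx).2
          rw [Nat.div_eq_iff hm_pos] at hj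
          rw [mem_coe, mem_Ico, add_mul]
          omega
      _ = m := by rw [Nat.card_Ico, add_mul, one_mul, Nat.add_sub_cancel_left]

variable {ι : Type*} {Γ : Finset ι} {f g : ι → ℕ} {s : ℕ}

lemma card_image_prodMk_le_of_monovaryOn (hf : ∀ i ∈ Γ, f i < s) (hg : ∀ i ∈ Γ, g i < s)
    (hfg : MonovaryOn g f Γ) : #(Γ.image fun i => (f i, g i)) ≤ 2 * s := by
  rw [← card_range (2 * s)]
  refine card_le_card_of_injOn (fun a => a.1 + a.2) ?_ ?_
  · simp only [Set.MapsTo, mem_coe, mem_image, mem_range]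
    rintro _ ⟨i, hi, rfl⟩
    have := hf i hi
    have := hg i hi
    dsimp only
    omega
  · simp only [Set.InjOn, mem_coe, mem_image]
    rintro _ ⟨i, hi, rfl⟩ _ ⟨j, hj, rfl⟩ h_add
    have := hfg hi hj
    have := hfg hj hi
    rw [Prod.mk.injEq]
    omega

lemma card_image_prodMk_le_of_antivaryOn (hf : ∀ i ∈ Γ, f i < s) (hg : ∀ i ∈ Γ, g i < s)
    (hfg : AntivaryOn g f Γ) : #(Γ.image fun i => (f i, g i)) ≤ 2 * s := by
  have h_reflect : MonovaryOn (fun i => s - 1 - g i) f Γ := fun i hi j hj hij =>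
    Nat.sub_le_sub_left (hfg hi hj hij) _
  have h_lt : ∀ i ∈ Γ, s - 1 - g i < s := fun i hi => by
    have := hg i hi
    omega
  calc #(Γ.image fun i => (f i, g i))
      = #((Γ.image fun i => (f i, s - 1 - g i)).image fun a => (a.1, s - 1 - a.2)) := by
        rw [image_image]
        congr 1
        refine image_congr fun i hi => ?_
        have := hg i hi
        rw [Function.comp_apply, Prod.mk.injEq]
        omega
    _ ≤ #(Γ.image fun i => (f i, s - 1 - g i)) := card_image_le
    _ ≤ 2 * s := card_image_prodMk_le_of_monovaryOn hf h_lt h_reflect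

end MonotoneColorings

section MobiusGraphs

variable {K : Type*} [Field K]

/-- The biaffine form `a x y + b x + c y + d` with coefficient matrix `!![a, b; c, d]`. Its zero
set is the graph of a Möbius transformation when the matrix is invertible, and of an affine one
when moreover `a = 0`. -/
def biaffine (M : Matrix (Fin 2) (Fin 2) K) (p : K × K) : K :=
  M 0 0 * p.1 * p.2 + M 0 1 * p.1 + M 1 0 * p.2 + M 1 1

/-- The biaffine form vanishing at `p`, `q` and `r`, whose value at `z` is
`(p₁ - q₁)(r₁ - z₁)(p₂ - r₂)(q₂ - z₂) - (p₂ - q₂)(r₂ - z₂)(p₁ - r₁)(q₁ - z₁)`: its zeros `z` are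
the points such that the first and second coordinates of `p, q, r, z` have equal cross ratios. -/
def mobiusThrough (p q r : K × K) : Matrix (Fin 2) (Fin 2) K :=
  let a := (p.1 - q.1) * (p.2 - r.2)
  let b := (p.2 - q.2) * (p.1 - r.1)
  !![a - b, b * r.2 - a * q.2; b * q.1 - a * r.1, a * (r.1 * q.2) - b * (r.2 * q.1)]

lemma biaffine_mobiusThrough (p q r z : K × K) :
    biaffine (mobiusThrough p q r) z =
      (p.1 - q.1) * (r.1 - z.1) * ((p.2 - r.2) * (q.2 - z.2)) -
        (p.2 - q.2) * (r.2 - z.2) * ((p.1 - r.1) * (q.1 - z.1)) := by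
  simp only [biaffine, mobiusThrough, Matrix.of_apply, Matrix.cons_val', Matrix.cons_val_zero,
    Matrix.cons_val_fin_one, Matrix.cons_val_one]
  ring

lemma det_mobiusThrough (p q r : K × K) :
    (mobiusThrough p q r).det =
      (p.1 - q.1) * (p.1 - r.1) * (q.1 - r.1) * ((p.2 - q.2) * (p.2 - r.2) * (q.2 - r.2)) := by
  rw [mobiusThrough, Matrix.det_fin_two_of]
  ring

variable {M : Matrix (Fin 2) (Fin 2) K} {p q r : K × K}

lemma denom_ne_zero_of_biaffine_eq_zero (hM : M.det ≠ 0) (hp : biaffine M p = 0) :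
    M 0 0 * p.1 + M 1 0 ≠ 0 := fun hu => hM <| by
  rw [biaffine] at hp
  rw [Matrix.det_fin_two]
  linear_combination M 0 0 * hp - (M 0 1 + M 0 0 * p.2) * hu

lemma snd_sub_snd_mul_denom_mul_denom (hp : biaffine M p = 0) (hq : biaffine M q = 0) :
    (p.2 - q.2) * ((M 0 0 * p.1 + M 1 0) * (M 0 0 * q.1 + M 1 0)) = M.det * (p.1 - q.1) := by
  rw [biaffine] at hp hq
  rw [Matrix.det_fin_two]
  linear_combination (M 0 0 * q.1 + M 1 0) * hp - (M 0 0 * p.1 + M 1 0) * hq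

lemma fst_eq_fst_iff_of_biaffine_eq_zero (hM : M.det ≠ 0) (hp : biaffine M p = 0)
    (hq : biaffine M q = 0) : p.1 = q.1 ↔ p.2 = q.2 := by
  have h_denom := mul_ne_zero (denom_ne_zero_of_biaffine_eq_zero hM hp)
    (denom_ne_zero_of_biaffine_eq_zero hM hq)
  rw [← sub_eq_zero, ← mul_eq_zero_iff_left hM, ← snd_sub_snd_mul_denom_mul_denom hp hq,
    mul_eq_zero_iff_right h_denom, sub_eq_zero]

lemma denom_mul_biaffine_mobiusThrough (hM : M.det ≠ 0) (hp : biaffine M p = 0)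
    (hq : biaffine M q = 0) (hr : biaffine M r = 0) (z : K × K) :
    (M 0 0 * p.1 + M 1 0) * (M 0 0 * q.1 + M 1 0) * (M 0 0 * r.1 + M 1 0) *
        biaffine (mobiusThrough p q r) z =
      M.det * ((p.1 - q.1) * (p.1 - r.1) * (q.1 - r.1)) * biaffine M z := by
  have snd_eq : ∀ {p : K × K}, biaffine M p = 0 →
      p.2 = -(M 0 1 * p.1 + M 1 1) / (M 0 0 * p.1 + M 1 0) := fun {p} hp => by
    rw [eq_div_iff (denom_ne_zero_of_biaffine_eq_zero hM hp)]
    rw [biaffine] at hp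
    linear_combination hp
  have hp' := denom_ne_zero_of_biaffine_eq_zero hM hp
  have hq' := denom_ne_zero_of_biaffine_eq_zero hM hq
  have hr' := denom_ne_zero_of_biaffine_eq_zero hM hr
  rw [biaffine_mobiusThrough, biaffine, Matrix.det_fin_two, snd_eq hp, snd_eq hq, snd_eq hr]
  field_simp
  ring

/-- The points of the grid `S × S` on the Möbius graph `biaffine M = 0`. -/
def mobiusGraph [DecidableEq K] (S : Finset K) (M : Matrix (Fin 2) (Fin 2) K) : Finset (K × K) :=
  {p ∈ S ×ˢ S | biaffine M p = 0}

section

variable [DecidableEq K] {S : Finset K}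

lemma mem_mobiusGraph : p ∈ mobiusGraph S M ↔ p ∈ S ×ˢ S ∧ biaffine M p = 0 := mem_filter

lemma fst_injOn_mobiusGraph (hM : M.det ≠ 0) : Set.InjOn Prod.fst (mobiusGraph S M : Set (K × K)) :=
  fun _ hp _ hq hpq => Prod.ext hpq <|
    (fst_eq_fst_iff_of_biaffine_eq_zero hM (mem_mobiusGraph.1 hp).2 (mem_mobiusGraph.1 hq).2).1 hpq

lemma card_mobiusGraph_le (hM : M.det ≠ 0) : #(mobiusGraph S M) ≤ #S :=
  card_le_card_of_injOn Prod.fst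
    (fun _ hp => (mem_product.1 (mem_mobiusGraph.1 hp).1).1) (fst_injOn_mobiusGraph hM)

theorem mobiusGraph_eq_mobiusGraph_mobiusThrough (hM : M.det ≠ 0) (hp : p ∈ mobiusGraph S M)
    (hq : q ∈ mobiusGraph S M) (hr : r ∈ mobiusGraph S M) (hpq : p ≠ q) (hpr : p ≠ r)
    (hqr : q ≠ r) : mobiusGraph S M = mobiusGraph S (mobiusThrough p q r) := by
  have h_inj := fst_injOn_mobiusGraph (S := S) hM
  have h_diff : M.det * ((p.1 - q.1) * (p.1 - r.1) * (q.1 - r.1)) ≠ 0 :=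
    mul_ne_zero hM <| mul_ne_zero (mul_ne_zero (sub_ne_zero.2 (h_inj.ne hp hq hpq))
      (sub_ne_zero.2 (h_inj.ne hp hr hpr))) (sub_ne_zero.2 (h_inj.ne hq hr hqr))
  rw [mem_mobiusGraph] at hp hq hr
  have h_denom := mul_ne_zero (mul_ne_zero (denom_ne_zero_of_biaffine_eq_zero hM hp.2)
    (denom_ne_zero_of_biaffine_eq_zero hM hq.2)) (denom_ne_zero_of_biaffine_eq_zero hM hr.2)
  refine filter_congr fun z _ => ?_
  rw [← mul_eq_zero_iff_left h_diff, ← denom_mul_biaffine_mobiusThrough hM hp.2 hq.2 hr.2 z,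
    mul_eq_zero_iff_left h_denom]

end

section

variable [LinearOrder K] [IsStrictOrderedRing K]

lemma card_image_prodMap_le_of_denom_mul_denom_pos {Γ : Finset (K × K)} {f : K → ℕ} {s : ℕ}
    (hf : Monotone f) (hfs : ∀ p ∈ Γ, f p.1 < s ∧ f p.2 < s) (hΓ : ∀ p ∈ Γ, biaffine M p = 0)
    (h_pos : ∀ p ∈ Γ, ∀ q ∈ Γ, 0 < (M 0 0 * p.1 + M 1 0) * (M 0 0 * q.1 + M 1 0)) :
    #(Γ.image (Prod.map f f)) ≤ 2 * s := by
  have h_diff : ∀ p ∈ Γ, ∀ q ∈ Γ, (p.2 - q.2) * (p.1 - q.1) *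
      ((M 0 0 * p.1 + M 1 0) * (M 0 0 * q.1 + M 1 0)) = M.det * (p.1 - q.1) ^ 2 :=
    fun p hp q hq => by
      linear_combination (p.1 - q.1) * snd_sub_snd_mul_denom_mul_denom (hΓ p hp) (hΓ q hq)
  rcases le_total 0 M.det with h | h
  · refine card_image_prodMk_le_of_monovaryOn (fun p hp => (hfs p hp).1)
      (fun p hp => (hfs p hp).2) fun p hp q hq hpq => hf ?_
    have h_nonneg : 0 ≤ (q.2 - p.2) * (q.1 - p.1) :=
      nonneg_of_mul_nonneg_left (by rw [h_diff q hq p hp]; positivity) (h_pos q hq p hp)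
    exact sub_nonneg.1 (nonneg_of_mul_nonneg_left h_nonneg (sub_pos.2 (hf.reflect_lt hpq)))
  · refine card_image_prodMk_le_of_antivaryOn (fun p hp => (hfs p hp).1)
      (fun p hp => (hfs p hp).2) fun p hp q hq hpq => hf ?_
    have h_nonpos : (q.2 - p.2) * (q.1 - p.1) ≤ 0 := by
      refine nonpos_of_mul_nonpos_left ?_ (h_pos q hq p hp)
      rw [h_diff q hq p hp]
      exact mul_nonpos_of_nonpos_of_nonneg h (sq_nonneg _)
    exact sub_nonpos.1 (nonpos_of_mul_nonpos_left h_nonpos (sub_pos.2 (hf.reflect_lt hpq)))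

/-- A Möbius graph has two branches, on either side of its pole, and is monotone on each. -/
theorem card_image_prodMap_mobiusGraph_le {S : Finset K} (hM : M.det ≠ 0) {f : K → ℕ} {s : ℕ}
    (hf : Monotone f) (hfs : ∀ x ∈ S, f x < s) :
    #((mobiusGraph S M).image (Prod.map f f)) ≤ 4 * s := by
  set u : K × K → K := fun p => M 0 0 * p.1 + M 1 0
  have hfs' : ∀ p ∈ mobiusGraph S M, f p.1 < s ∧ f p.2 < s := fun p hp =>
    have hpS := mem_product.1 (mem_mobiusGraph.1 hp).1
    ⟨hfs _ hpS.1, hfs _ hpS.2⟩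
  have h_branch : ∀ Γ ⊆ mobiusGraph S M, (∀ p ∈ Γ, ∀ q ∈ Γ, 0 < u p * u q) →
      #(Γ.image (Prod.map f f)) ≤ 2 * s := fun Γ hΓ h_pos =>
    card_image_prodMap_le_of_denom_mul_denom_pos hf (fun p hp => hfs' p (hΓ hp))
      (fun p hp => (mem_mobiusGraph.1 (hΓ hp)).2) h_pos
  have h_right := h_branch {p ∈ mobiusGraph S M | 0 < u p} (filter_subset _ _) fun p hp q hq =>
    mul_pos (mem_filter.1 hp).2 (mem_filter.1 hq).2
  have h_left := h_branch {p ∈ mobiusGraph S M | ¬0 < u p} (filter_subset _ _) fun p hp q hq => by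
    have h_neg : ∀ p ∈ {p ∈ mobiusGraph S M | ¬0 < u p}, u p < 0 := fun p hp =>
      lt_of_le_of_ne (not_lt.1 (mem_filter.1 hp).2)
        (denom_ne_zero_of_biaffine_eq_zero hM (mem_mobiusGraph.1 (mem_filter.1 hp).1).2)
    exact mul_pos_of_neg_of_neg (h_neg p hp) (h_neg q hq)
  rw [← filter_union_filter_not_eq (fun p => 0 < u p) (mobiusGraph S M), image_union]
  exact (card_union_le _ _).trans (by omega)

end

end MobiusGraphs

section Incidences

lemma exists_pow_le_and_le_two_mul_pow {n k : ℕ} (hn : n ≠ 0) (hk : 0 < k) :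
    ∃ s, 0 < s ∧ s ^ n ≤ k ∧ k ≤ (2 * s) ^ n := by
  have h_lt := Nat.lt_pow_nthRoot_add_one hn k
  have h_pos : 0 < Nat.nthRoot n k := Nat.pos_of_ne_zero fun h => by
    rw [h, zero_add, one_pow] at h_lt
    omega
  refine ⟨Nat.nthRoot n k, h_pos, Nat.pow_nthRoot_le (.inl hn), h_lt.le.trans ?_⟩
  gcongr
  omega

variable {K : Type*} [Field K]

/-- The line of all `(ω₀₁, ω₀₂)` completing `a = ![ω₂₃, ω₁₃, ω₀₃, ω₁₂]` to a solution of the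
Plücker relation `ω₀₁ω₂₃ - ω₀₂ω₁₃ + ω₀₃ω₁₂ = 0`. -/
def pluckerLine (a : Fin 4 → K) : Matrix (Fin 2) (Fin 2) K :=
  !![0, a 0; -a 1, a 2 * a 3]

lemma biaffine_pluckerLine (a : Fin 4 → K) (p : K × K) :
    biaffine (pluckerLine a) p = p.1 * a 0 - p.2 * a 1 + a 2 * a 3 := by
  simp only [biaffine, pluckerLine, Matrix.of_apply, Matrix.cons_val', Matrix.cons_val_zero,
    Matrix.cons_val_fin_one, Matrix.cons_val_one]
  ring

lemma eq_of_pluckerLine_of_ne {a b : Fin 4 → K} {p q : K × K} (hpq : p ≠ q) (h₂ : a 2 = b 2)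
    (h₃ : a 3 = b 3) (h₂_ne : a 2 ≠ 0) (h₃_ne : a 3 ≠ 0)
    (hap : biaffine (pluckerLine a) p = 0) (haq : biaffine (pluckerLine a) q = 0)
    (hbp : biaffine (pluckerLine b) p = 0) (hbq : biaffine (pluckerLine b) q = 0) : a = b := by
  rw [biaffine_pluckerLine] at hap haq hbp hbq
  rw [← h₂, ← h₃] at hbp hbq
  set D := p.1 * q.2 - p.2 * q.1
  have ha₀ : a 0 * D = a 2 * a 3 * (p.2 - q.2) := by linear_combination q.2 * hap - p.2 * haq
  have hb₀ : b 0 * D = a 2 * a 3 * (p.2 - q.2) := by linear_combination q.2 * hbp - p.2 * hbq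
  have ha₁ : a 1 * D = a 2 * a 3 * (p.1 - q.1) := by linear_combination q.1 * hap - p.1 * haq
  have hb₁ : b 1 * D = a 2 * a 3 * (p.1 - q.1) := by linear_combination q.1 * hbp - p.1 * hbq
  have hD_ne : D ≠ 0 := fun h => hpq <| by
    have h_ne := mul_ne_zero h₂_ne h₃_ne
    rw [h, mul_zero, eq_comm, mul_eq_zero_iff_left h_ne, sub_eq_zero] at ha₀ ha₁
    exact Prod.ext ha₁ ha₀
  ext i
  fin_cases i
  · exact mul_right_cancel₀ hD_ne (ha₀.trans hb₀.symm)
  · exact mul_right_cancel₀ hD_ne (ha₁.trans hb₁.symm)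
  · exact h₂
  · exact h₃

section

variable [DecidableEq K] {T : Finset K}

/-- `Γ` is the trace on the grid `S × S` of the graph of an invertible Möbius transformation. -/
def IsMobiusGraph (S : Finset K) (Γ : Finset (K × K)) : Prop :=
  ∃ M : Matrix (Fin 2) (Fin 2) K, M.det ≠ 0 ∧ Γ = mobiusGraph S M

/-- The solutions in `T` of the Plücker relation, grouped as `(![ω₂₃, ω₁₃, ω₀₃, ω₁₂], (ω₀₁, ω₀₂))`
so that the second component runs over a line determined by the first. -/
def pluckerSolutions (T : Finset K) : Finset ((Fin 4 → K) × K × K) :=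
  {x ∈ (Fintype.piFinset fun _ => T) ×ˢ (T ×ˢ T) |
    x.2.1 * x.1 0 - x.2.2 * x.1 1 + x.1 2 * x.1 3 = 0}

lemma card_pluckerSolutions (T : Finset K) :
    #(pluckerSolutions T) =
      ∑ a ∈ Fintype.piFinset fun _ : Fin 4 => T, #(mobiusGraph T (pluckerLine a)) := by
  simp only [pluckerSolutions, mobiusGraph, biaffine_pluckerLine, card_filter, sum_product]

lemma card_filter_pluckerLine_le (h0 : (0 : K) ∉ T) {A : Finset (K × K)} (hA : #A = 2) :
    #{a ∈ Fintype.piFinset fun _ : Fin 4 => T | A ⊆ mobiusGraph T (pluckerLine a)} ≤ #T ^ 2 := by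
  obtain ⟨p, q, hpq, rfl⟩ := card_eq_two.1 hA
  have h_mem : ∀ a ∈ {a ∈ Fintype.piFinset fun _ : Fin 4 => T |
      {p, q} ⊆ mobiusGraph T (pluckerLine a)}, (∀ i, a i ∈ T) ∧
        biaffine (pluckerLine a) p = 0 ∧ biaffine (pluckerLine a) q = 0 := fun a ha => by
    rw [mem_filter, Fintype.mem_piFinset, insert_subset_iff, singleton_subset_iff,
      mem_mobiusGraph, mem_mobiusGraph] at ha
    exact ⟨ha.1, ha.2.1.2, ha.2.2.2⟩
  rw [sq, ← card_product]
  refine card_le_card_of_injOn (fun a => (a 2, a 3)) (fun a ha => ?_) fun a ha b hb hab => ?_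
  · exact mem_product.2 ⟨(h_mem a ha).1 2, (h_mem a ha).1 3⟩
  · obtain ⟨haT, hap, haq⟩ := h_mem a ha
    obtain ⟨-, hbp, hbq⟩ := h_mem b hb
    exact eq_of_pluckerLine_of_ne hpq (Prod.ext_iff.1 hab).1 (Prod.ext_iff.1 hab).2
      (ne_of_mem_of_not_mem (haT 2) h0) (ne_of_mem_of_not_mem (haT 3) h0) hap haq hbp hbq

lemma isMobiusGraph_pluckerLine {a : Fin 4 → K} (h₀ : a 0 ≠ 0) (h₁ : a 1 ≠ 0) :
    IsMobiusGraph T (mobiusGraph T (pluckerLine a)) :=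
  ⟨pluckerLine a, by simpa [pluckerLine, Matrix.det_fin_two_of] using ⟨h₀, h₁⟩, rfl⟩

end

variable [LinearOrder K] [IsStrictOrderedRing K] {S T : Finset K}

theorem sum_card_isMobiusGraph_le {ι : Type*} {I : Finset ι}
    {Γ : ι → Finset (K × K)} (hΓ : ∀ i ∈ I, IsMobiusGraph S (Γ i)) {d C s : ℕ}
    (hC : ∀ A : Finset (K × K), #A = d + 1 → #{i ∈ I | A ⊆ Γ i} ≤ C) (hs : 0 < s) (hsS : s ≤ #S) :
    ∃ m, m * s ≤ 2 * #S ∧ ∑ i ∈ I, #(Γ i) ≤ #I * (d * (4 * s)) + #S ^ 2 * (m ^ 2) ^ d * C := by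
  obtain ⟨f, m, hf, hfs, hfm, hms⟩ := exists_monotone_coloring S hs hsS
  refine ⟨m, hms, ?_⟩
  rw [sq #S, ← card_product]
  refine sum_card_le_of_cells (Prod.map f f) (fun i hi => ?_) (fun i hi => ?_) (fun b => ?_) hC
  · obtain ⟨M, -, h⟩ := hΓ i hi
    exact h.trans_subset (filter_subset _ _)
  · obtain ⟨M, hM, h⟩ := hΓ i hi
    exact h ▸ card_image_prodMap_mobiusGraph_le hM hf hfs
  · calc #{p ∈ S ×ˢ S | Prod.map f f p = b}
        = #({x ∈ S | f x = b.1} ×ˢ {y ∈ S | f y = b.2}) := by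
          rw [← filter_product]
          simp only [Prod.ext_iff, Prod.map_fst, Prod.map_snd]
      _ ≤ m ^ 2 := by
          rw [card_product, sq]
          exact Nat.mul_le_mul (hfm _) (hfm _)

/-- A grid of `s × s` cells with `s ≈ #T ^ (2 / 3)` balances the two terms of the incidence
bound. -/
theorem card_pluckerSolutions_pow_three_le (h0 : (0 : K) ∉ T) :
    #(pluckerSolutions T) ^ 3 ≤ 36 ^ 3 * #T ^ 14 := by
  rcases T.eq_empty_or_nonempty with rfl | hT
  · simp [pluckerSolutions]
  set t := #T
  obtain ⟨s, hs, hs_le, ht_le⟩ :=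
    exists_pow_le_and_le_two_mul_pow three_ne_zero (pow_pos hT.card_pos 2)
  have hst : s ≤ t := by
    refine (Nat.pow_le_pow_iff_left two_ne_zero).1 (le_trans ?_ hs_le)
    exact Nat.pow_le_pow_right hs (by norm_num)
  have h_mobius : ∀ a ∈ Fintype.piFinset fun _ : Fin 4 => T,
      IsMobiusGraph T (mobiusGraph T (pluckerLine a)) := fun a ha =>
    have ha_ne i : a i ≠ 0 := ne_of_mem_of_not_mem (Fintype.mem_piFinset.1 ha i) h0
    isMobiusGraph_pluckerLine (ha_ne 0) (ha_ne 1)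
  obtain ⟨m, hms, h_sum⟩ :=
    sum_card_isMobiusGraph_le h_mobius (fun A => card_filter_pluckerLine_le h0) hs hst
  have hm : m ^ 2 ≤ 32 * s := by
    refine Nat.le_of_mul_le_mul_right ?_ (pow_pos hs 2)
    calc m ^ 2 * s ^ 2 = (m * s) ^ 2 := by ring
      _ ≤ (2 * t) ^ 2 := by gcongr
      _ = 4 * t ^ 2 := by ring
      _ ≤ 4 * (2 * s) ^ 3 := by gcongr
      _ = 32 * s * s ^ 2 := by ring
  rw [← card_pluckerSolutions, Fintype.card_piFinset_const, pow_one] at h_sum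
  calc #(pluckerSolutions T) ^ 3
      ≤ (t ^ 4 * (1 * (4 * s)) + t ^ 2 * m ^ 2 * t ^ 2) ^ 3 := by gcongr
    _ ≤ (t ^ 4 * (1 * (4 * s)) + t ^ 2 * (32 * s) * t ^ 2) ^ 3 := by gcongr
    _ = 36 ^ 3 * s ^ 3 * t ^ 12 := by ring
    _ ≤ 36 ^ 3 * t ^ 2 * t ^ 12 := by gcongr
    _ = 36 ^ 3 * t ^ 14 := by ring

end Incidences

section MobiusFamily

variable {K : Type*} [Field K]

section

variable [DecidableEq K]

/-- The traces on `S × S` of Möbius graphs that have at least three points in `S × S`, hence are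
determined by them. -/
noncomputable def mobiusGraphs (S : Finset K) : Finset (Finset (K × K)) :=
  {Γ ∈ (S ×ˢ S).powerset | IsMobiusGraph S Γ ∧ 3 ≤ #Γ}

variable {S : Finset K}

lemma mem_mobiusGraphs {Γ : Finset (K × K)} :
    Γ ∈ mobiusGraphs S ↔ IsMobiusGraph S Γ ∧ 3 ≤ #Γ := by
  rw [mobiusGraphs, mem_filter, mem_powerset, and_iff_right_of_imp]
  rintro ⟨⟨M, -, rfl⟩, -⟩
  exact filter_subset _ _

lemma IsMobiusGraph.eq_of_subset_of_subset {Γ Γ' A : Finset (K × K)} (hΓ : IsMobiusGraph S Γ)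
    (hΓ' : IsMobiusGraph S Γ') (hA : #A = 3) (hAΓ : A ⊆ Γ) (hAΓ' : A ⊆ Γ') : Γ = Γ' := by
  obtain ⟨M, hM, rfl⟩ := hΓ
  obtain ⟨M', hM', rfl⟩ := hΓ'
  obtain ⟨p, q, r, hpq, hpr, hqr, rfl⟩ := card_eq_three.1 hA
  simp only [insert_subset_iff, singleton_subset_iff] at hAΓ hAΓ'
  obtain ⟨hp, hq, hr⟩ := hAΓ
  obtain ⟨hp', hq', hr'⟩ := hAΓ'
  rw [mobiusGraph_eq_mobiusGraph_mobiusThrough hM hp hq hr hpq hpr hqr,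
    mobiusGraph_eq_mobiusGraph_mobiusThrough hM' hp' hq' hr' hpq hpr hqr]

lemma card_filter_mobiusGraphs_subset_le_one (F : Finset (Finset (K × K)))
    (hF : F ⊆ mobiusGraphs S) {A : Finset (K × K)} (hA : #A = 3) : #{Γ ∈ F | A ⊆ Γ} ≤ 1 := by
  refine card_le_one.2 fun Γ hΓ Γ' hΓ' => ?_
  rw [mem_filter] at hΓ hΓ'
  exact (mem_mobiusGraphs.1 (hF hΓ.1)).1.eq_of_subset_of_subset (mem_mobiusGraphs.1 (hF hΓ'.1)).1
    hA hΓ.2 hΓ'.2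

lemma card_mobiusGraphs_le (S : Finset K) : #(mobiusGraphs S) ≤ #S ^ 6 := by
  have h_subset : ∀ Γ ∈ mobiusGraphs S, Γ ⊆ S ×ˢ S := fun Γ hΓ =>
    mem_powerset.1 (mem_filter.1 hΓ).1
  have h_upper := sum_card_le_of_cells (fun _ => ()) (N := 1) h_subset
    (fun Γ _ => card_le_one_of_subsingleton _) (fun _ => card_filter_le _ _)
    fun A => card_filter_mobiusGraphs_subset_le_one (mobiusGraphs S) subset_rfl
  have h_lower := card_nsmul_le_sum (mobiusGraphs S) (fun Γ => #Γ) 3 fun Γ hΓ =>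
    (mem_mobiusGraphs.1 hΓ).2
  rw [card_product, smul_eq_mul] at *
  have h_pow : #S * #S * (#S * #S) ^ 2 * 1 = #S ^ 6 := by ring
  omega

end

variable [LinearOrder K] [IsStrictOrderedRing K]

lemma card_rich_mobiusGraphs_mul_pow_five_le (S : Finset K) {s : ℕ} (hs : 0 < s) :
    #{Γ ∈ mobiusGraphs S | 16 * s ≤ #Γ} * s ^ 5 ≤ 2 * #S ^ 6 := by
  set F := {Γ ∈ mobiusGraphs S | 16 * s ≤ #Γ}
  have hF : ∀ Γ ∈ F, IsMobiusGraph S Γ ∧ 16 * s ≤ #Γ := fun Γ hΓ =>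
    ⟨(mem_mobiusGraphs.1 (mem_filter.1 hΓ).1).1, (mem_filter.1 hΓ).2⟩
  rcases F.eq_empty_or_nonempty with hF_empty | ⟨Γ, hΓ⟩
  · rw [hF_empty, card_empty, zero_mul]
    exact Nat.zero_le _
  have hsS : s ≤ #S := by
    obtain ⟨⟨M, hM, rfl⟩, h⟩ := hF Γ hΓ
    have := card_mobiusGraph_le (S := S) hM
    omega
  obtain ⟨m, hms, h_upper⟩ := sum_card_isMobiusGraph_le (fun Γ hΓ => (hF Γ hΓ).1)
    (fun A => card_filter_mobiusGraphs_subset_le_one F (filter_subset _ _)) hs hsS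
  have h_lower := card_nsmul_le_sum F (fun Γ => #Γ) (16 * s) fun Γ hΓ => (hF Γ hΓ).2
  have h_card : #F * (8 * s) ≤ #S ^ 2 * m ^ 4 := by
    rw [smul_eq_mul] at h_lower
    linarith [h_lower.trans h_upper]
  refine Nat.le_of_mul_le_mul_left ?_ (show 0 < 8 by norm_num)
  calc 8 * (#F * s ^ 5) = #F * (8 * s) * s ^ 4 := by ring
    _ ≤ #S ^ 2 * m ^ 4 * s ^ 4 := by gcongr
    _ = #S ^ 2 * (m * s) ^ 4 := by ring
    _ ≤ #S ^ 2 * (2 * #S) ^ 4 := by gcongr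
    _ = 8 * (2 * #S ^ 6) := by ring

lemma pow_four_le_four_mul_sum_Ioc_pow_three (n : ℕ) :
    (n : ℝ) ^ 4 ≤ 4 * ∑ s ∈ Ioc 0 n, (s : ℝ) ^ 3 := by
  induction n with
  | zero => simp
  | succ n ih =>
    rw [sum_Ioc_succ_top (Nat.zero_le n)]
    push_cast
    nlinarith [sq_nonneg (n : ℝ), pow_nonneg (n.cast_nonneg : (0 : ℝ) ≤ n) 3]

lemma pow_four_le_const_add_sum_Ioc_div (n : ℕ) :
    (n : ℝ) ^ 4 ≤ 2 ^ 16 + 2 ^ 22 * ∑ s ∈ Ioc 0 (n / 16), (s : ℝ) ^ 3 := by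
  have h_sum := pow_four_le_four_mul_sum_Ioc_pow_three (n / 16)
  set j := n / 16
  rcases Nat.eq_zero_or_pos j with h | h
  · have hn : (n : ℝ) ≤ 16 := by
      have : n ≤ 16 := by omega
      exact_mod_cast this
    calc (n : ℝ) ^ 4 ≤ 16 ^ 4 := by gcongr
      _ = 2 ^ 16 + 2 ^ 22 * ∑ s ∈ Ioc 0 j, (s : ℝ) ^ 3 := by rw [h, Ioc_self, sum_empty]; norm_num
  · have hn : (n : ℝ) ≤ 32 * j := by
      have : n ≤ 32 * j := by omega
      exact_mod_cast this
    calc (n : ℝ) ^ 4 ≤ (32 * j) ^ 4 := by gcongr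
      _ ≤ 2 ^ 16 + 2 ^ 22 * ∑ s ∈ Ioc 0 j, (s : ℝ) ^ 3 := by linarith

theorem sum_card_pow_four_mobiusGraphs_le (S : Finset K) :
    ∑ Γ ∈ mobiusGraphs S, #Γ ^ 4 ≤ 2 ^ 25 * #S ^ 6 := by
  have h_layers := sum_sum_Ioc_le (I := mobiusGraphs S) (f := fun Γ => #Γ / 16)
    (g := fun s => (s : ℝ) ^ 3) (A := 2 * #S ^ 6) (w := 0) (by positivity) fun s hs => by
      have h := card_rich_mobiusGraphs_mul_pow_five_le S hs
      simp only [Nat.le_div_iff_mul_le (show 0 < 16 by norm_num), mul_comm s 16]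
      rw [mul_assoc, ← pow_add]
      exact_mod_cast h
  have h_card : (#(mobiusGraphs S) : ℝ) ≤ #S ^ 6 := by exact_mod_cast card_mobiusGraphs_le S
  have h_real : ∑ Γ ∈ mobiusGraphs S, (#Γ : ℝ) ^ 4 ≤ 2 ^ 25 * #S ^ 6 :=
    calc ∑ Γ ∈ mobiusGraphs S, (#Γ : ℝ) ^ 4
        ≤ ∑ Γ ∈ mobiusGraphs S, (2 ^ 16 + 2 ^ 22 * ∑ s ∈ Ioc 0 (#Γ / 16), (s : ℝ) ^ 3) :=
          sum_le_sum fun Γ _ => pow_four_le_const_add_sum_Ioc_div #Γ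
      _ = #(mobiusGraphs S) * 2 ^ 16 +
            2 ^ 22 * ∑ Γ ∈ mobiusGraphs S, ∑ s ∈ Ioc 0 (#Γ / 16), (s : ℝ) ^ 3 := by
          rw [sum_add_distrib, sum_const, nsmul_eq_mul, mul_sum]
      _ ≤ #S ^ 6 * 2 ^ 16 + 2 ^ 22 * (2 * #S ^ 6 * (2 / ((0 : ℕ) + 1))) := by gcongr
      _ ≤ 2 ^ 25 * #S ^ 6 := by
          have : (0 : ℝ) ≤ #S ^ 6 := by positivity
          norm_num
          linarith
  exact_mod_cast h_real

end MobiusFamily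

section CrossRatios

variable {K : Type*} [Field K]

/-- The cross ratio of four points of the affine line. -/
def crossRatio (q : Fin 4 → K) : K :=
  (q 0 - q 1) * (q 2 - q 3) / ((q 0 - q 2) * (q 1 - q 3))

lemma biaffine_mobiusThrough_of_crossRatio_eq {a b : Fin 4 → K} (ha : a.Injective)
    (hb : b.Injective) (hab : crossRatio a = crossRatio b) (i : Fin 4) :
    biaffine (mobiusThrough (a 0, b 0) (a 1, b 1) (a 2, b 2)) (a i, b i) = 0 := by
  have h_ne : ∀ {q : Fin 4 → K}, q.Injective → (q 0 - q 2) * (q 1 - q 3) ≠ 0 := fun hq =>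
    mul_ne_zero (sub_ne_zero.2 (hq.ne (by decide))) (sub_ne_zero.2 (hq.ne (by decide)))
  rw [crossRatio, crossRatio, div_eq_div_iff (h_ne ha) (h_ne hb)] at hab
  rw [biaffine_mobiusThrough]
  fin_cases i
  · dsimp only [Fin.zero_eta]
    ring
  · dsimp only [Fin.mk_one]
    ring
  · dsimp only [Fin.reduceFinMk]
    ring
  · dsimp only [Fin.reduceFinMk]
    linear_combination hab

section

variable [DecidableEq K] {S : Finset K}

lemma exists_mem_mobiusGraphs_of_crossRatio_eq {a b : Fin 4 ↪ S}
    (hab : crossRatio (fun i => (a i : K)) = crossRatio fun i => (b i : K)) :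
    ∃ Γ ∈ mobiusGraphs S, ∀ i, ((a i : K), (b i : K)) ∈ Γ := by
  have ha : (fun i => (a i : K)).Injective := Subtype.val_injective.comp a.injective
  have hb : (fun i => (b i : K)).Injective := Subtype.val_injective.comp b.injective
  set p : Fin 4 → K × K := fun i => (a i, b i)
  set M := mobiusThrough (p 0) (p 1) (p 2)
  have hp : ∀ i, p i ∈ mobiusGraph S M := fun i =>
    mem_mobiusGraph.2 ⟨mem_product.2 ⟨(a i).2, (b i).2⟩,
      biaffine_mobiusThrough_of_crossRatio_eq ha hb hab i⟩
  refine ⟨mobiusGraph S M, mem_mobiusGraphs.2 ⟨⟨M, ?_, rfl⟩, ?_⟩, hp⟩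
  · rw [det_mobiusThrough]
    refine mul_ne_zero (mul_ne_zero (mul_ne_zero ?_ ?_) ?_) (mul_ne_zero (mul_ne_zero ?_ ?_) ?_) <;>
      simp [p, sub_eq_zero, ha.eq_iff, hb.eq_iff]
  · have hp_inj : p.Injective := fun i j hij => ha (Prod.ext_iff.1 hij).1
    calc 3 ≤ #(univ : Finset (Fin 4)) := by decide
      _ ≤ #(mobiusGraph S M) := card_le_card_of_injOn p (fun i _ => hp i) hp_inj.injOn

/-- The cross ratios of quadruples of distinct points of `S`. -/
noncomputable def crossRatios (S : Finset K) : Finset K :=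
  univ.image fun q : Fin 4 ↪ S => crossRatio fun i => (q i : K)

lemma card_crossRatio_collisions_le (S : Finset K) :
    #{z : (Fin 4 ↪ S) × (Fin 4 ↪ S) |
        crossRatio (fun i => (z.1 i : K)) = crossRatio fun i => (z.2 i : K)} ≤
      ∑ Γ ∈ mobiusGraphs S, #Γ ^ 4 := by
  calc _ ≤ #((mobiusGraphs S).biUnion fun Γ => Fintype.piFinset fun _ : Fin 4 => Γ) := by
        refine card_le_card_of_injOn (fun z i => ((z.1 i : K), (z.2 i : K))) (fun z hz => ?_) ?_
        · obtain ⟨Γ, hΓ, h⟩ := exists_mem_mobiusGraphs_of_crossRatio_eq (mem_filter.1 hz).2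
          exact mem_biUnion.2 ⟨Γ, hΓ, Fintype.mem_piFinset.2 h⟩
        · intro z _ z' _ h
          have h_coord i := Prod.ext_iff.1 (congrFun h i)
          exact Prod.ext (DFunLike.ext _ _ fun i => Subtype.ext (h_coord i).1)
            (DFunLike.ext _ _ fun i => Subtype.ext (h_coord i).2)
    _ ≤ ∑ Γ ∈ mobiusGraphs S, #(Fintype.piFinset fun _ : Fin 4 => Γ) := card_biUnion_le
    _ = ∑ Γ ∈ mobiusGraphs S, #Γ ^ 4 := by simp only [Fintype.card_piFinset_const]

end

/-- Coincidences of cross ratios come from Möbius graphs containing four points of `S × S`, so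
Cauchy–Schwarz turns the fourth moment of these graphs into a lower bound for `crossRatios S`. -/
theorem sq_card_le_card_crossRatios [LinearOrder K] [IsStrictOrderedRing K] {S : Finset K}
    (hS : 4 ≤ #S) : #S ^ 2 ≤ 2 ^ 41 * #(crossRatios S) := by
  set Q : Finset (Fin 4 ↪ S) := univ
  have hQ : #S ^ 4 ≤ 2 ^ 8 * #Q :=
    calc #S ^ 4 ≤ (4 * (#S + 1 - 4)) ^ 4 := by
          gcongr
          omega
      _ = 2 ^ 8 * (#S + 1 - 4) ^ 4 := by ring
      _ ≤ 2 ^ 8 * (#S).descFactorial 4 := by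
          gcongr
          exact Nat.pow_sub_le_descFactorial #S 4
      _ = 2 ^ 8 * #Q := by
          rw [card_univ, Fintype.card_embedding_eq, Fintype.card_fin, Fintype.card_coe]
  have h_cs := sq_card_le_card_image_mul_card_collisions
    (fun q : Fin 4 ↪ S => crossRatio fun i => (q i : K)) Q
  have h_energy := (card_crossRatio_collisions_le S).trans (sum_card_pow_four_mobiusGraphs_le S)
  rw [univ_product_univ] at h_cs
  refine Nat.le_of_mul_le_mul_right ?_ (pow_pos (show 0 < #S by omega) 6)
  calc #S ^ 2 * #S ^ 6 = (#S ^ 4) ^ 2 := by ring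
    _ ≤ (2 ^ 8 * #Q) ^ 2 := by gcongr
    _ = 2 ^ 16 * #Q ^ 2 := by ring
    _ ≤ 2 ^ 16 * (#(crossRatios S) * (2 ^ 25 * #S ^ 6)) := by
        gcongr
        exact h_cs.trans (Nat.mul_le_mul_left _ h_energy)
    _ = 2 ^ 41 * #(crossRatios S) * #S ^ 6 := by ring

end CrossRatios

section Wedge

variable {K : Type*} [Field K]

/-- The standard symplectic form on the plane `K × K`. -/
def wedge (p q : K × K) : K := p.1 * q.2 - p.2 * q.1

lemma eq_of_wedge_eq {u r p q : K × K} (hur : wedge u r ≠ 0) (hu : wedge u p = wedge u q)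
    (hr : wedge r p = wedge r q) : p = q := by
  simp only [wedge] at hur hu hr
  ext
  · refine mul_left_cancel₀ hur ?_
    linear_combination r.1 * hu - u.1 * hr
  · refine mul_left_cancel₀ hur ?_
    linear_combination r.2 * hu - u.2 * hr

lemma exists_eq_smul_iff_wedge_eq_zero {u p : K × K} (hu : u ≠ 0) :
    (∃ t : K, p = t • u) ↔ wedge u p = 0 := by
  constructor
  · rintro ⟨t, rfl⟩
    simp only [wedge, Prod.smul_fst, Prod.smul_snd, smul_eq_mul]
    ring
  · intro h
    rw [wedge, sub_eq_zero] at h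
    by_cases h₁ : u.1 = 0
    · have h₂ : u.2 ≠ 0 := fun h₂ => hu (Prod.ext h₁ h₂)
      refine ⟨p.2 / u.2, Prod.ext ?_ ?_⟩
      · rw [h₁, zero_mul, eq_comm, mul_eq_zero_iff_left h₂] at h
        simp [h, h₁]
      · simp [h₂]
    · refine ⟨p.1 / u.1, Prod.ext ?_ ?_⟩
      · simp [h₁]
      · rw [Prod.smul_snd, smul_eq_mul]
        field_simp
        linear_combination h

lemma exists_wedge_ne_zero {P : Finset (K × K)} (hP : ∃ p ∈ P, ∃ q ∈ P, wedge p q ≠ 0) {u : K × K}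
    (hu : u ≠ 0) : ∃ r ∈ P, wedge u r ≠ 0 := by
  obtain ⟨p, hp, q, hq, hpq⟩ := hP
  by_contra! h
  obtain ⟨t, rfl⟩ := (exists_eq_smul_iff_wedge_eq_zero hu).2 (h p hp)
  refine hpq ?_
  have := h q hq
  simp only [wedge, Prod.smul_fst, Prod.smul_snd, smul_eq_mul] at this ⊢
  linear_combination t * this

variable [DecidableEq K]

/-- The set of nonzero values of `wedge` on `P × P`. -/
def wedgeValues (P : Finset (K × K)) : Finset K :=
  ((P ×ˢ P).image fun z => wedge z.1 z.2).erase 0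

/-- The points of `P` on the line through the origin spanned by `u`. -/
def lineThrough (P : Finset (K × K)) (u : K × K) : Finset (K × K) :=
  {p ∈ P | wedge u p = 0}

/-- The slopes `p.1 / p.2` of the lines through the origin that meet `P`, the line `p.2 = 0`
excepted. -/
def slopes (P : Finset (K × K)) : Finset K :=
  {p ∈ P | p.2 ≠ 0}.image fun p => p.1 / p.2

variable {P : Finset (K × K)}

lemma wedge_mem_wedgeValues {p q : K × K} (hp : p ∈ P) (hq : q ∈ P) (hpq : wedge p q ≠ 0) :
    wedge p q ∈ wedgeValues P :=
  mem_erase.2 ⟨hpq, mem_image.2 ⟨(p, q), mem_product.2 ⟨hp, hq⟩, rfl⟩⟩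

lemma fst_eq_mul_snd_of_mem_lineThrough {s : K} {p : K × K} (hp : p ∈ lineThrough P (s, 1)) :
    p.1 = s * p.2 := by
  have h := (mem_filter.1 hp).2
  rw [wedge] at h
  linear_combination -h

theorem card_lineThrough_le (hP0 : ∀ p ∈ P, p ≠ 0) (hP : ∃ p ∈ P, ∃ q ∈ P, wedge p q ≠ 0)
    {u : K × K} (hu : u ≠ 0) : #(lineThrough P u) ≤ #(wedgeValues P) := by
  obtain ⟨r, hr, hur⟩ := exists_wedge_ne_zero hP hu
  refine card_le_card_of_injOn (wedge r) (fun p hp => ?_) fun p hp q hq hpq => ?_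
  · obtain ⟨hpP, hup⟩ := mem_filter.1 hp
    refine wedge_mem_wedgeValues hr hpP fun hrp => hP0 p hpP (eq_of_wedge_eq hur ?_ ?_)
    · simpa [wedge] using hup
    · simpa [wedge] using hrp
  · exact eq_of_wedge_eq hur ((mem_filter.1 hp).2.trans (mem_filter.1 hq).2.symm) hpq

lemma card_le_sum_card_lineThrough (P : Finset (K × K)) :
    #P ≤ ∑ s ∈ slopes P, #(lineThrough P (s, 1)) + #(lineThrough P (1, 0)) := by
  rw [← card_filter_add_card_filter_not (s := P) fun p => p.2 ≠ 0]
  gcongr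
  · rw [card_eq_sum_card_image (fun p => p.1 / p.2)]
    refine sum_le_sum fun s _ => card_le_card fun p hp => ?_
    simp only [mem_filter] at hp
    obtain ⟨⟨hpP, hp₂⟩, rfl⟩ := hp
    refine mem_filter.2 ⟨hpP, ?_⟩
    rw [wedge, div_mul_cancel₀ _ hp₂, one_mul, sub_self]
  · intro p hp
    obtain ⟨hpP, hp₂⟩ := mem_filter.1 hp
    exact mem_filter.2 ⟨hpP, by simpa [wedge] using hp₂⟩

end Wedge

section PluckerCoordinates

variable {K : Type*} [Field K]

/-- The six values of `wedge` on a quadruple of points, in the layout of `pluckerSolutions`. -/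
def pluckerCoordinates (p : Fin 4 → K × K) : (Fin 4 → K) × K × K :=
  (![wedge (p 2) (p 3), wedge (p 1) (p 3), wedge (p 0) (p 3), wedge (p 1) (p 2)],
    wedge (p 0) (p 1), wedge (p 0) (p 2))

/-- The ratio `ω₀₁ω₂₃ / (ω₀₂ω₁₃)` of Plücker coordinates, which is the cross ratio of the four lines
through the origin. -/
def pluckerRatio (x : (Fin 4 → K) × K × K) : K :=
  x.2.1 * x.1 0 / (x.2.2 * x.1 1)

lemma wedge_of_fst_eq_mul_snd {s s' : K} {p p' : K × K} (hp : p.1 = s * p.2)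
    (hp' : p'.1 = s' * p'.2) : wedge p p' = (s - s') * (p.2 * p'.2) := by
  rw [wedge, hp, hp']
  ring

variable {p : Fin 4 → K × K} {q : Fin 4 → K}

lemma pluckerRatio_pluckerCoordinates (hp : ∀ i, (p i).1 = q i * (p i).2)
    (hp0 : ∀ i, (p i).2 ≠ 0) : pluckerRatio (pluckerCoordinates p) = crossRatio q := by
  have h_wedge i j := wedge_of_fst_eq_mul_snd (hp i) (hp j)
  have h_prod : ∏ i, (p i).2 ≠ 0 := prod_ne_zero_iff.2 fun i _ => hp0 i
  simp only [pluckerRatio, pluckerCoordinates, crossRatio, Matrix.cons_val_zero,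
    Matrix.cons_val_one, h_wedge]
  rw [← mul_div_mul_right ((q 0 - q 1) * (q 2 - q 3)) _ h_prod, Fin.prod_univ_four]
  congr 1 <;> ring

lemma pluckerCoordinates_mem_pluckerSolutions [DecidableEq K] {P : Finset (K × K)}
    (hpP : ∀ i, p i ∈ P) (hp : ∀ i j, i ≠ j → wedge (p i) (p j) ≠ 0) :
    pluckerCoordinates p ∈ pluckerSolutions (wedgeValues P) := by
  have h_mem i j (hij : i ≠ j) := wedge_mem_wedgeValues (hpP i) (hpP j) (hp i j hij)
  simp only [pluckerSolutions, mem_filter, mem_product, Fintype.mem_piFinset]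
  refine ⟨⟨fun i => ?_, h_mem 0 1 (by decide), h_mem 0 2 (by decide)⟩, ?_⟩
  · fin_cases i <;> exact h_mem _ _ (by decide)
  · simp only [pluckerCoordinates, wedge, Matrix.cons_val_zero, Matrix.cons_val_one,
      Matrix.cons_val]
    ring

variable [LinearOrder K] [IsStrictOrderedRing K]

lemma eq_of_pluckerCoordinates_eq {p' : Fin 4 → K × K} (hq : q.Injective)
    (hp : ∀ i, (p i).1 = q i * (p i).2) (hp' : ∀ i, (p' i).1 = q i * (p' i).2)
    (hp0 : ∀ i, (p i).2 ≠ 0) (h_sign : 0 < (p 0).2 ↔ 0 < (p' 0).2)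
    (h : pluckerCoordinates p = pluckerCoordinates p') : p = p' := by
  have h_mul : ∀ {i j}, i ≠ j → wedge (p i) (p j) = wedge (p' i) (p' j) →
      (p i).2 * (p j).2 = (p' i).2 * (p' j).2 := fun {i j} hij h => by
    rw [wedge_of_fst_eq_mul_snd (hp i) (hp j), wedge_of_fst_eq_mul_snd (hp' i) (hp' j)] at h
    exact mul_left_cancel₀ (sub_ne_zero.2 (hq.ne hij)) h
  obtain ⟨h_left, h01, h02⟩ : _ ∧ _ ∧ _ := by simpa only [pluckerCoordinates, Prod.mk.injEq] using h
  replace h01 := h_mul (by decide) h01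
  replace h02 := h_mul (by decide) h02
  have h03 := h_mul (by decide) (congrFun h_left 2)
  have h12 := h_mul (by decide) (congrFun h_left 3)
  have h_sq : (p 0).2 ^ 2 = (p' 0).2 ^ 2 := by
    refine mul_right_cancel₀ (mul_ne_zero (hp0 1) (hp0 2)) ?_
    linear_combination (p 0).2 * (p 2).2 * h01 + (p' 0).2 * (p' 1).2 * h02 - (p' 0).2 ^ 2 * h12
  have h0 : (p 0).2 = (p' 0).2 := by
    rcases sq_eq_sq_iff_eq_or_eq_neg.1 h_sq with h | h
    · exact h
    · have := hp0 0
      grind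
  have h_snd : ∀ i, (p i).2 = (p' i).2 := fun i => by
    have h_cancel : ∀ {j}, (p 0).2 * (p j).2 = (p' 0).2 * (p' j).2 → (p j).2 = (p' j).2 :=
      fun h => mul_left_cancel₀ (hp0 0) (h.trans (by rw [h0]))
    fin_cases i
    exacts [h0, h_cancel h01, h_cancel h02, h_cancel h03]
  exact funext fun i => Prod.ext (by rw [hp i, hp' i, h_snd i]) (h_snd i)

variable {P : Finset (K × K)}

lemma prod_card_lineThrough_le (hP0 : ∀ p ∈ P, p ≠ 0) (hq : q.Injective) :
    ∏ i, #(lineThrough P (q i, 1)) ≤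
      2 * #{x ∈ pluckerSolutions (wedgeValues P) | pluckerRatio x = crossRatio q} := by
  set X := {x ∈ pluckerSolutions (wedgeValues P) | pluckerRatio x = crossRatio q}
  have h_fst : ∀ p ∈ Fintype.piFinset fun i => lineThrough P (q i, 1),
      ∀ i, (p i).1 = q i * (p i).2 := fun p hp i =>
    fst_eq_mul_snd_of_mem_lineThrough (Fintype.mem_piFinset.1 hp i)
  have h_memP : ∀ p ∈ Fintype.piFinset fun i => lineThrough P (q i, 1), ∀ i, p i ∈ P :=
    fun p hp i => (mem_filter.1 (Fintype.mem_piFinset.1 hp i)).1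
  have h_snd : ∀ p ∈ Fintype.piFinset fun i => lineThrough P (q i, 1), ∀ i, (p i).2 ≠ 0 :=
    fun p hp i h => hP0 _ (h_memP p hp i) (Prod.ext (by rw [h_fst p hp i, h, mul_zero]; rfl) h)
  calc ∏ i, #(lineThrough P (q i, 1))
      = #(Fintype.piFinset fun i => lineThrough P (q i, 1)) := (Fintype.card_piFinset _).symm
    _ ≤ #((univ : Finset Bool) ×ˢ X) := by
        refine card_le_card_of_injOn (fun p => (decide (0 < (p 0).2), pluckerCoordinates p))
          (fun p hp => ?_) fun p hp p' hp' h => ?_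
        · refine mem_product.2 ⟨mem_univ _, mem_filter.2 ⟨?_, ?_⟩⟩
          · refine pluckerCoordinates_mem_pluckerSolutions (h_memP p hp) fun i j hij => ?_
            rw [wedge_of_fst_eq_mul_snd (h_fst p hp i) (h_fst p hp j)]
            exact mul_ne_zero (sub_ne_zero.2 (hq.ne hij))
              (mul_ne_zero (h_snd p hp i) (h_snd p hp j))
          · exact pluckerRatio_pluckerCoordinates (h_fst p hp) (h_snd p hp)
        · obtain ⟨h_sign, h_coord⟩ := Prod.ext_iff.1 h
          exact eq_of_pluckerCoordinates_eq hq (h_fst p hp) (h_fst p' hp') (h_snd p hp)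
            (decide_eq_decide.1 h_sign) h_coord
    _ = 2 * #X := by rw [card_product, card_univ, Fintype.card_bool]

theorem card_crossRatios_mul_pow_four_le (hP0 : ∀ p ∈ P, p ≠ 0) {S : Finset K} {v : ℕ}
    (hS : ∀ s ∈ S, v ≤ #(lineThrough P (s, 1))) :
    #(crossRatios S) * v ^ 4 ≤ 2 * #(pluckerSolutions (wedgeValues P)) := by
  set X := pluckerSolutions (wedgeValues P)
  have h_fiber : ∀ c ∈ crossRatios S, v ^ 4 ≤ 2 * #{x ∈ X | pluckerRatio x = c} := fun c hc => by
    obtain ⟨q, -, rfl⟩ := mem_image.1 hc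
    calc v ^ 4 = ∏ _i : Fin 4, v := by rw [prod_const, card_univ, Fintype.card_fin]
      _ ≤ ∏ i, #(lineThrough P ((q i : K), 1)) := prod_le_prod' fun i _ => hS _ (q i).2
      _ ≤ _ := prod_card_lineThrough_le hP0 (Subtype.val_injective.comp q.injective)
  calc #(crossRatios S) * v ^ 4 ≤ ∑ c ∈ crossRatios S, 2 * #{x ∈ X | pluckerRatio x = c} :=
        card_nsmul_le_sum _ _ _ h_fiber
    _ ≤ 2 * #X := by
        rw [← mul_sum, sum_card_fiberwise_eq_card_filter]
        gcongr
        exact filter_subset _ _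

end PluckerCoordinates

section RichLines

variable {K : Type*} [Field K] [LinearOrder K] [IsStrictOrderedRing K] {P : Finset (K × K)}

lemma pow_six_card_mul_sq_le (hP0 : ∀ p ∈ P, p ≠ 0) {S : Finset K} {v : ℕ} (hS4 : 4 ≤ #S)
    (hS : ∀ s ∈ S, v ≤ #(lineThrough P (s, 1))) :
    (#S * v ^ 2) ^ 6 ≤ 2 ^ 144 * #(wedgeValues P) ^ 14 := by
  calc (#S * v ^ 2) ^ 6 = (#S ^ 2 * v ^ 4) ^ 3 := by ring
    _ ≤ (2 ^ 41 * #(crossRatios S) * v ^ 4) ^ 3 := by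
        gcongr
        exact sq_card_le_card_crossRatios hS4
    _ = 2 ^ 123 * (#(crossRatios S) * v ^ 4) ^ 3 := by ring
    _ ≤ 2 ^ 123 * (2 * #(pluckerSolutions (wedgeValues P))) ^ 3 :=
        Nat.mul_le_mul_left _ (Nat.pow_le_pow_left (card_crossRatios_mul_pow_four_le hP0 hS) 3)
    _ = 2 ^ 126 * #(pluckerSolutions (wedgeValues P)) ^ 3 := by ring
    _ ≤ 2 ^ 126 * (36 ^ 3 * #(wedgeValues P) ^ 14) := by
        gcongr
        exact card_pluckerSolutions_pow_three_le (notMem_erase _ _)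
    _ ≤ 2 ^ 144 * #(wedgeValues P) ^ 14 := by
        rw [← mul_assoc]
        gcongr
        norm_num

/-- With fewer than four lines there are no cross ratios, but then no line has more points than
`wedgeValues P` has elements. -/
theorem pow_six_card_mul_sq_le_of_exists_wedge_ne_zero (hP0 : ∀ p ∈ P, p ≠ 0)
    (hP : ∃ p ∈ P, ∃ q ∈ P, wedge p q ≠ 0) {S : Finset K} {v : ℕ}
    (hS : ∀ s ∈ S, v ≤ #(lineThrough P (s, 1))) :
    (#S * v ^ 2) ^ 6 ≤ 2 ^ 144 * #(wedgeValues P) ^ 14 := by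
  rcases le_or_gt 4 #S with hS4 | hS4
  · exact pow_six_card_mul_sq_le hP0 hS4 hS
  rcases S.eq_empty_or_nonempty with rfl | ⟨s, hs⟩
  · simp
  have hv : v ≤ #(wedgeValues P) := (hS s hs).trans (card_lineThrough_le hP0 hP (by simp))
  obtain ⟨p, hp, q, hq, hpq⟩ := hP
  have ht : 0 < #(wedgeValues P) := card_pos.2 ⟨_, wedge_mem_wedgeValues hp hq hpq⟩
  calc (#S * v ^ 2) ^ 6 ≤ (3 * #(wedgeValues P) ^ 2) ^ 6 := by
        gcongr
        omega
    _ = 3 ^ 6 * #(wedgeValues P) ^ 12 := by ring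
    _ ≤ 2 ^ 144 * #(wedgeValues P) ^ 14 :=
        Nat.mul_le_mul (by norm_num) (Nat.pow_le_pow_right ht (by norm_num))

theorem card_mul_sq_le_rpow (hP0 : ∀ p ∈ P, p ≠ 0) (hP : ∃ p ∈ P, ∃ q ∈ P, wedge p q ≠ 0)
    {S : Finset K} {v : ℕ} (hS : ∀ s ∈ S, v ≤ #(lineThrough P (s, 1))) :
    (#S * v ^ 2 : ℝ) ≤ 2 ^ 24 * (#(wedgeValues P) : ℝ) ^ (7 / 3 : ℝ) := by
  refine le_of_pow_le_pow_left₀ (n := 6) (by norm_num) (by positivity) ?_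
  have h_pow : ((#(wedgeValues P) : ℝ) ^ (7 / 3 : ℝ)) ^ 6 = (#(wedgeValues P) : ℝ) ^ 14 := by
    rw [← Real.rpow_mul_natCast (Nat.cast_nonneg _), ← Real.rpow_natCast]
    norm_num
  rw [mul_pow (2 ^ 24 : ℝ), h_pow, ← pow_mul]
  exact_mod_cast pow_six_card_mul_sq_le_of_exists_wedge_ne_zero hP0 hP hS

lemma sum_card_lineThrough_mul_le (hP0 : ∀ p ∈ P, p ≠ 0)
    (hP : ∃ p ∈ P, ∃ q ∈ P, wedge p q ≠ 0) {w : ℕ} (hw : 0 < w)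
    (h_line : ∀ s ∈ slopes P, w ≤ #(lineThrough P (s, 1))) :
    (∑ s ∈ slopes P, #(lineThrough P (s, 1)) : ℝ) * w ≤
      3 * (2 ^ 24 * (#(wedgeValues P) : ℝ) ^ (7 / 3 : ℝ)) := by
  set A : ℝ := 2 ^ 24 * (#(wedgeValues P) : ℝ) ^ (7 / 3 : ℝ)
  have hA : 0 ≤ A := by positivity
  have h_base : (#(slopes P) * w ^ 2 : ℝ) ≤ A := card_mul_sq_le_rpow hP0 hP h_line
  have h_layers := sum_sum_Ioc_le (I := slopes P) (f := fun s => #(lineThrough P (s, 1)))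
    (g := fun _ => 1) (w := w) hA fun v _ => by
      rw [mul_one]
      exact card_mul_sq_le_rpow hP0 hP fun s hs => (mem_filter.1 hs).2
  have h_split : (∑ s ∈ slopes P, #(lineThrough P (s, 1)) : ℝ) =
      #(slopes P) * w + ∑ s ∈ slopes P, ∑ _v ∈ Ioc w #(lineThrough P (s, 1)), (1 : ℝ) := by
    rw [← nsmul_eq_mul, ← sum_const, ← sum_add_distrib]
    refine sum_congr rfl fun s hs => ?_
    rw [sum_const, Nat.card_Ioc, nsmul_one, Nat.cast_sub (h_line s hs), add_sub_cancel]
  calc _ ≤ (#(slopes P) * w + A * (2 / (w + 1))) * w := by rw [h_split]; gcongr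
    _ = #(slopes P) * w ^ 2 + 2 * A * (w / (w + 1)) := by ring
    _ ≤ A + 2 * A * 1 := by
        gcongr
        exact div_le_one_of_le₀ (by linarith) (by positivity)
    _ = 3 * A := by ring

end RichLines

section MainTheorem

universe u

variable {K : Type u} [Field K] [LinearOrder K] [IsStrictOrderedRing K] {P : Finset (K × K)}

theorem card_mul_le_rpow_of_le_card_lineThrough (hP0 : ∀ p ∈ P, p ≠ 0)
    (hP : ∃ p ∈ P, ∃ q ∈ P, wedge p q ≠ 0) {w : ℕ} (hw : 0 < w)
    (h_line : ∀ u ≠ 0, (lineThrough P u).Nonempty → w ≤ #(lineThrough P u)) :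
    (#P * w : ℝ) ≤ 2 ^ 26 * (#(wedgeValues P) : ℝ) ^ (7 / 3 : ℝ) := by
  set t := #(wedgeValues P)
  have h_bound {u : K × K} (hu : u ≠ 0) : #(lineThrough P u) ≤ t := card_lineThrough_le hP0 hP hu
  have hwt : w ≤ t := by
    obtain ⟨p, hp, -⟩ := hP
    have hp_line : p ∈ lineThrough P p := mem_filter.2 ⟨hp, by rw [wedge]; ring⟩
    exact (h_line p (hP0 p hp) ⟨p, hp_line⟩).trans (h_bound (hP0 p hp))
  have h_horizontal : (#(lineThrough P (1, 0)) * w : ℝ) ≤ (t : ℝ) ^ (7 / 3 : ℝ) :=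
    calc (#(lineThrough P (1, 0)) * w : ℝ) ≤ t * t := by
          gcongr
          exact h_bound (by simp)
      _ = (t : ℝ) ^ (2 : ℝ) := by rw [Real.rpow_two, sq]
      _ ≤ (t : ℝ) ^ (7 / 3 : ℝ) :=
          Real.rpow_le_rpow_of_exponent_le (by exact_mod_cast hw.trans_le hwt) (by norm_num)
  have h_slopes := sum_card_lineThrough_mul_le hP0 hP hw fun s hs => by
    obtain ⟨p, hp, rfl⟩ := mem_image.1 hs
    obtain ⟨hpP, hp₂⟩ := mem_filter.1 hp
    refine h_line _ (by simp) ⟨p, mem_filter.2 ⟨hpP, ?_⟩⟩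
    rw [wedge, div_mul_cancel₀ _ hp₂, one_mul, sub_self]
  have h_card : (#P : ℝ) ≤ ∑ s ∈ slopes P, (#(lineThrough P (s, 1)) : ℝ) +
      #(lineThrough P (1, 0)) := by exact_mod_cast card_le_sum_card_lineThrough P
  calc (#P * w : ℝ) ≤ (∑ s ∈ slopes P, (#(lineThrough P (s, 1)) : ℝ) +
        #(lineThrough P (1, 0))) * w := by gcongr
    _ ≤ 3 * (2 ^ 24 * (t : ℝ) ^ (7 / 3 : ℝ)) + (t : ℝ) ^ (7 / 3 : ℝ) := by
        rw [add_mul]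
        gcongr
    _ ≤ 2 ^ 26 * (t : ℝ) ^ (7 / 3 : ℝ) := by
        have : (0 : ℝ) ≤ (t : ℝ) ^ (7 / 3 : ℝ) := by positivity
        linarith

theorem stmt_9_general :
    ∃ c : ℝ, 0 < c ∧
      ∀ (K : Type u) [Field K] [LinearOrder K] [IsStrictOrderedRing K] (w₀ : ℝ)
        (P : Finset (K × K)),
        0 < w₀ →
        (∀ p ∈ P, p ≠ 0) →
        (∀ u : K × K, u ≠ 0 → (∃ p ∈ P, ∃ t : K, p = t • u) →
          w₀ ≤ #{p ∈ P | ∃ t : K, p = t • u}) →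
        (∃ p ∈ P, ∃ q ∈ P, wedge p q ≠ 0) →
        c * (#P * w₀) ^ (3 / 7 : ℝ) ≤ #(wedgeValues P) := by
  refine ⟨((2 ^ 26) ^ (3 / 7 : ℝ))⁻¹, by positivity, fun K _ _ _ w₀ P hw₀ hP0 h_line hP => ?_⟩
  have h_ceil : ∀ u ≠ 0, (lineThrough P u).Nonempty → ⌈w₀⌉₊ ≤ #(lineThrough P u) := by
    rintro u hu ⟨p, hp⟩
    have h := h_line u hu ⟨p, (mem_filter.1 hp).1,
      (exists_eq_smul_iff_wedge_eq_zero hu).2 (mem_filter.1 hp).2⟩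
    have h_eq : {p ∈ P | ∃ t : K, p = t • u} = lineThrough P u := by
      ext
      simp [lineThrough, exists_eq_smul_iff_wedge_eq_zero hu]
    rw [h_eq] at h
    exact Nat.ceil_le.2 h
  have h_main : (#P * w₀ : ℝ) ≤ 2 ^ 26 * (#(wedgeValues P) : ℝ) ^ (7 / 3 : ℝ) :=
    (mul_le_mul_of_nonneg_left (Nat.le_ceil w₀) (Nat.cast_nonneg _)).trans
      (card_mul_le_rpow_of_le_card_lineThrough hP0 hP (Nat.ceil_pos.2 hw₀) h_ceil)
  rw [inv_mul_le_iff₀ (by positivity)]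
  calc (#P * w₀ : ℝ) ^ (3 / 7 : ℝ)
      ≤ (2 ^ 26 * (#(wedgeValues P) : ℝ) ^ (7 / 3 : ℝ)) ^ (3 / 7 : ℝ) := by gcongr
    _ = (2 ^ 26) ^ (3 / 7 : ℝ) * #(wedgeValues P) := by
        rw [Real.mul_rpow (by positivity) (by positivity), ← Real.rpow_mul (Nat.cast_nonneg _)]
        norm_num

end MainTheorem

theorem stmt_9 :
    ∃ c : ℝ, 0 < c ∧
      ∀ (w₀ : ℝ) (P : Finset (ℝ × ℝ)),
        1 ≤ w₀ →
        (∀ p ∈ P, p ≠ (0 : ℝ × ℝ)) →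
        -- every line through the origin meeting `P` supports at least `w₀` points of `P`
        (∀ u : ℝ × ℝ, u ≠ 0 → (∃ p ∈ P, ∃ t : ℝ, p = t • u) →
          w₀ ≤ ((P.filter fun p => ∃ t : ℝ, p = t • u).card : ℝ)) →
        -- `P` is supported on at least four distinct lines through the origin
        (∃ p₁ ∈ P, ∃ p₂ ∈ P, ∃ p₃ ∈ P, ∃ p₄ ∈ P,
          omegaForm p₁ p₂ ≠ 0 ∧ omegaForm p₁ p₃ ≠ 0 ∧ omegaForm p₁ p₄ ≠ 0 ∧
          omegaForm p₂ p₃ ≠ 0 ∧ omegaForm p₂ p₄ ≠ 0 ∧ omegaForm p₃ p₄ ≠ 0) →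
        c * ((P.card : ℝ) * w₀) ^ ((3 : ℝ) / 7) ≤ ((Tset P).card : ℝ) := by
  obtain ⟨c, hc, h⟩ := stmt_9_general
  exact ⟨c, hc, fun w₀ P hw hP0 h_line ⟨p₁, hp₁, p₂, hp₂, _, _, _, _, h₁₂, _⟩ =>
    h ℝ w₀ P (zero_lt_one.trans_le hw) hP0 h_line ⟨p₁, hp₁, p₂, hp₂, h₁₂⟩⟩
end

section
/- (Konyagin–Shkredov collinear triples bound.) There exists an absolute constant C > 0 such that the following holds. Let A and C' be finite nonempty sets of nonzero reals and let α₁, α₂, α₃ be nonzero real numbers. Then the number of triples (a₁,a₂,a₃) ∈ A³ with α₁a₁ + α₂a₂ + α₃a₃ = 0 is at most C·(|AC'|²/(|A||C'|))^(1/3)·|A|^(5/3). -/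
open Finset
open scoped Pointwise Classical

/-!
For fixed `c ∈ C'`, a solution of `α₁ a₁ + α₂ a₂ + α₃ a₃ = 0` says that the point `(c⁻¹, a₂)` lies
on the line `α₁ (a₁ c) x + α₂ y + α₃ a₃ = 0`. Each solution thus gives `|C'|` incidences between the
grid `C'⁻¹ × A` and the `|AC'| |A|` lines indexed by `AC' × A`, and a Szemerédi–Trotter bound
finishes.

On a grid `X × Y` that bound is elementary. Cut `X` and `Y` into `R` blocks of consecutive elements
each. A monotone curve meets at most `2R` of the resulting cells, so all but `2R` of its incidences
can be charged to pairs of its points in a common cell; two curves never share such a pair, and at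
most `(|X||Y|/R)²` pairs of grid points in a common cell differ in both coordinates. Then optimise
over `R`.
-/

section Collisions

variable {α β : Type*} [DecidableEq β] {S : Finset α} {φ : α → β}

/-- The ordered pairs of distinct elements of `S` having the same image under `φ`; they measure how
far `φ` is from being injective on `S`. -/
def collisions (S : Finset α) (φ : α → β) : Finset (α × α) :=
  {q ∈ S.offDiag | φ q.1 = φ q.2}

lemma mem_collisions {q : α × α} :
    q ∈ collisions S φ ↔ (q.1 ∈ S ∧ q.2 ∈ S ∧ q.1 ≠ q.2) ∧ φ q.1 = φ q.2 := by
  simp only [collisions, mem_filter, mem_offDiag]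

lemma card_le_card_image_add_card_collisions (S : Finset α) (φ : α → β) :
    #S ≤ #(S.image φ) + #(collisions S φ) := by
  obtain ⟨T, hTS, hinj, himage⟩ := exists_subset_injOn_image_eq_of_surjOn (f := φ) (S : Set α)
    (S.image φ) (by rw [coe_image]; exact Set.surjOn_image φ S)
  have hrep : ∀ x ∈ S, ∃ y ∈ T, φ y = φ x := fun x hx ↦
    mem_image.1 (himage ▸ mem_image_of_mem φ hx)
  choose! rep hrepT hrepφ using hrep
  have hsdiff : #(S \ T) ≤ #(collisions S φ) := by
    refine card_le_card_of_injOn (fun x ↦ (x, rep x)) (fun x hx ↦ ?_)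
      fun x _ y _ hxy ↦ congrArg Prod.fst hxy
    obtain ⟨hxS, hxT⟩ := mem_sdiff.1 hx
    have hne : x ≠ rep x := fun h ↦ hxT (h ▸ hrepT x hxS)
    exact mem_collisions.2 ⟨⟨hxS, hTS (hrepT x hxS), hne⟩, (hrepφ x hxS).symm⟩
  calc #S = #T + #(S \ T) := by rw [add_comm, card_sdiff_add_card_eq_card (mod_cast hTS)]
    _ ≤ #(S.image φ) + #(collisions S φ) := by
      rw [← himage, card_image_of_injOn hinj]
      gcongr

lemma card_collisions_le {n : ℕ} (hfiber : ∀ x ∈ S, #{y ∈ S | φ y = φ x} ≤ n + 1) :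
    #(collisions S φ) ≤ n * #S := by
  refine card_le_mul_card_image_of_maps_to (f := Prod.fst)
    (fun q hq ↦ (mem_collisions.1 hq).1.1) n fun x hx ↦ ?_
  calc #{q ∈ collisions S φ | q.1 = x} ≤ #({y ∈ S | φ y = φ x}.erase x) := by
        refine card_le_card_of_injOn Prod.snd ?_ ?_ <;>
          grind [Set.MapsTo, Set.InjOn, mem_collisions]
    _ = #{y ∈ S | φ y = φ x} - 1 := card_erase_of_mem (by simp [hx])
    _ ≤ n := by have := hfiber x hx; omega

lemma sum_card_collisions_le {ι γ δ : Type*} [DecidableEq γ] [DecidableEq δ] {L : Finset ι}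
    {h : ι → α → β} (hinj : ∀ i ∈ L, Function.Injective (h i))
    (hmeet : (L : Set ι).Pairwise fun i j ↦ {x | h i x = h j x}.Subsingleton)
    (X : Finset α) (Y : Finset β) (f : α → γ) (g : β → δ) :
    ∑ i ∈ L, #(collisions {x ∈ X | h i x ∈ Y} fun x ↦ (f x, g (h i x))) ≤
      #(collisions X f) * #(collisions Y g) := by
  rw [← card_product, ← card_sigma]
  refine card_le_card_of_injOn (fun z ↦ (z.2, (h z.1 z.2.1, h z.1 z.2.2))) ?_ ?_
  · rintro ⟨i, x, x'⟩ hz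
    simp only [mem_coe, mem_sigma, mem_collisions, mem_filter, Prod.mk.injEq] at hz
    obtain ⟨hi, ⟨⟨hx, hy⟩, ⟨hx', hy'⟩, hne⟩, hfx, hgy⟩ := hz
    simp only [mem_coe, mem_product, mem_collisions]
    exact ⟨⟨⟨hx, hx', hne⟩, hfx⟩, ⟨hy, hy', (hinj i hi).ne hne⟩, hgy⟩
  · rintro ⟨i, x, x'⟩ hz ⟨j, w, w'⟩ hz' heq
    simp only [mem_coe, mem_sigma, mem_collisions] at hz hz'
    simp only [Prod.mk.injEq] at heq
    obtain ⟨⟨rfl, rfl⟩, hxx, hxx'⟩ := heq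
    obtain rfl : i = j := by
      by_contra hij
      exact hz.2.1.2.2 (hmeet hz.1 hz'.1 hij hxx hxx')
    rfl

end Collisions

section Blocks

variable {α : Type*} [LinearOrder α]

lemma monotone_card_filter_lt (X : Finset α) : Monotone fun x ↦ #{y ∈ X | y < x} :=
  fun _ _ hxy ↦ card_le_card (monotone_filter_right X fun _ _ h ↦ h.trans_le hxy)

lemma strictMonoOn_card_filter_lt_s12 (X : Finset α) :
    StrictMonoOn (fun x ↦ #{y ∈ X | y < x}) X := by
  intro x hx z _ hxz
  refine card_lt_card ((ssubset_iff_of_subset ?_).2 ⟨x, by simpa using ⟨hx, hxz⟩, by simp⟩)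
  exact monotone_filter_right X fun _ _ h ↦ h.trans hxz

lemma exists_monotone_card_collisions_le (X : Finset α) {R : ℕ} (hR : 0 < R) :
    ∃ f : α → ℕ, Monotone f ∧ (∀ x ∈ X, f x < R) ∧ #(collisions X f) * R ≤ #X ^ 2 := by
  set n := #X / R
  set rank : α → ℕ := fun x ↦ #{y ∈ X | y < x}
  have hrank_lt : ∀ x ∈ X, rank x < #X := fun x hx ↦
    card_lt_card (filter_ssubset.2 ⟨x, hx, lt_irrefl x⟩)
  refine ⟨fun x ↦ rank x / (n + 1),
    fun _ _ hxy ↦ Nat.div_le_div_right (monotone_card_filter_lt X hxy), fun x hx ↦ ?_, ?_⟩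
  · rw [Nat.div_lt_iff_lt_mul n.succ_pos, mul_comm]
    exact (hrank_lt x hx).trans (Nat.lt_mul_of_div_lt n.lt_succ_self hR)
  · have hblock : ∀ x ∈ X, #{y ∈ X | rank y / (n + 1) = rank x / (n + 1)} ≤ n + 1 := by
      intro x _
      set k := rank x / (n + 1)
      calc #{y ∈ X | rank y / (n + 1) = k} ≤ #(Ico (k * (n + 1)) (k * (n + 1) + (n + 1))) := by
            refine card_le_card_of_injOn rank (fun y hy ↦ ?_)
              ((strictMonoOn_card_filter_lt_s12 X).injOn.mono (coe_subset.2 (filter_subset _ X)))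
            rw [coe_Ico, Set.mem_Ico, ← (mem_filter.1 hy).2]
            exact ⟨Nat.div_mul_le_self _ _, Nat.lt_div_mul_add n.succ_pos⟩
        _ = n + 1 := by simp
    calc #(collisions X fun x ↦ rank x / (n + 1)) * R ≤ n * #X * R := by
          gcongr
          exact card_collisions_le hblock
      _ = n * R * #X := by ring
      _ ≤ #X * #X := by
          gcongr
          exact Nat.div_mul_le_self _ _
      _ = #X ^ 2 := (sq _).symm

end Blocks

section Staircase

variable {α : Type*} [LinearOrder α] {S : Finset α} {f g : α → ℕ} {R : ℕ}

lemma card_image_prodMk_le_of_monotoneOn (hf : MonotoneOn f S) (hg : MonotoneOn g S)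
    (hfR : ∀ x ∈ S, f x < R) (hgR : ∀ x ∈ S, g x < R) :
    #(S.image fun x ↦ (f x, g x)) ≤ 2 * R := by
  -- Two comparable pairs with the same coordinate sum are equal.
  calc #(S.image fun x ↦ (f x, g x)) ≤ #(range (2 * R)) := by
        refine card_le_card_of_injOn (fun c ↦ c.1 + c.2) ?_ ?_
        · simp only [Set.MapsTo, mem_coe, forall_mem_image, mem_range]
          intro x hx
          linarith [hfR x hx, hgR x hx]
        · simp only [Set.InjOn, mem_coe, forall_mem_image, Prod.mk.injEq]
          intro x hx y hy hsum
          rcases le_total x y with hxy | hyx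
          · have := hf hx hy hxy
            have := hg hx hy hxy
            omega
          · have := hf hy hx hyx
            have := hg hy hx hyx
            omega
    _ = 2 * R := card_range _

lemma card_image_prodMk_le_of_antitoneOn (hf : MonotoneOn f S) (hg : AntitoneOn g S)
    (hfR : ∀ x ∈ S, f x < R) (hgR : ∀ x ∈ S, g x < R) :
    #(S.image fun x ↦ (f x, g x)) ≤ 2 * R := by
  calc #(S.image fun x ↦ (f x, g x)) ≤ #(S.image fun x ↦ (f x, R - 1 - g x)) := by
        refine card_le_card_of_injOn (fun c ↦ (c.1, R - 1 - c.2)) ?_ ?_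
        · simp only [Set.MapsTo, mem_coe, forall_mem_image]
          exact fun x hx ↦ mem_image_of_mem (fun x ↦ (f x, R - 1 - g x)) hx
        · simp only [Set.InjOn, mem_coe, forall_mem_image, Prod.mk.injEq]
          intro x hx y hy hxy
          have := hgR x hx
          have := hgR y hy
          omega
    _ ≤ 2 * R := by
        refine card_image_prodMk_le_of_monotoneOn hf
          (fun x hx y hy hxy ↦ Nat.sub_le_sub_left (hg hx hy hxy) _) hfR fun x hx ↦ ?_
        have := hfR x hx
        omega

end Staircase

lemma rpow_one_third_pow_three {x : ℝ} (hx : 0 ≤ x) : (x ^ ((1 : ℝ) / 3)) ^ 3 = x := by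
  rw [← Real.rpow_mul_natCast hx]
  norm_num

lemma rpow_two_thirds_pow_three {x : ℝ} (hx : 0 ≤ x) : (x ^ ((2 : ℝ) / 3)) ^ 3 = x ^ 2 := by
  rw [← Real.rpow_mul_natCast hx, ← Real.rpow_natCast]
  norm_num

lemma le_rpow_of_forall_mul_sq_le {I N l : ℝ} (hN : 0 ≤ N) (hl : 0 < l)
    (hI : ∀ R : ℕ, 0 < R → I * R ^ 2 ≤ 2 * R ^ 3 * l + N ^ 2) :
    I ≤ 3 * (N * l) ^ ((2 : ℝ) / 3) + 2 * l := by
  -- The two terms on the right of `hI` balance at `R³ ≈ N² / l`.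
  set r : ℝ := (N ^ 2 / l) ^ ((1 : ℝ) / 3)
  have hr : 0 ≤ r := by positivity
  have hr3 : r ^ 3 = N ^ 2 / l := rpow_one_third_pow_three (by positivity)
  have hrl : r * l = (N * l) ^ ((2 : ℝ) / 3) := by
    refine (pow_left_inj₀ (by positivity) (by positivity) three_ne_zero).1 ?_
    rw [rpow_two_thirds_pow_three (by positivity), mul_pow, hr3]
    field_simp
  set R : ℕ := ⌊r⌋₊ + 1
  have hrR : r ≤ R := by
    push_cast [R]
    exact (Nat.lt_floor_add_one r).le
  have hRr : (R : ℝ) ≤ r + 1 := by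
    push_cast [R]
    linarith [Nat.floor_le hr]
  have hR : (0 : ℝ) < R := mod_cast Nat.succ_pos _
  have hNR : N ^ 2 ≤ r * l * R ^ 2 :=
    calc N ^ 2 = r * l * r ^ 2 := by rw [eq_div_iff hl.ne'] at hr3; linarith
      _ ≤ r * l * R ^ 2 := by gcongr
  have hIR : I * R ^ 2 ≤ (2 * R * l + r * l) * R ^ 2 := by
    linarith [hI R (Nat.succ_pos _)]
  calc I ≤ 2 * R * l + r * l := le_of_mul_le_mul_right hIR (by positivity)
    _ ≤ 2 * (r + 1) * l + r * l := by gcongr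
    _ = 3 * (N * l) ^ ((2 : ℝ) / 3) + 2 * l := by rw [← hrl]; ring

section GridIncidences

variable {ι α β : Type*} [LinearOrder α] [LinearOrder β] {L : Finset ι} {h : ι → α → β}

lemma card_image_cell_le {X : Finset α} {Y : Finset β} {u : α → β}
    (hu : StrictMono u ∨ StrictAnti u) {f : α → ℕ} {g : β → ℕ} (hf : Monotone f) (hg : Monotone g)
    {R : ℕ} (hfR : ∀ x ∈ X, f x < R) (hgR : ∀ y ∈ Y, g y < R) :
    #({x ∈ X | u x ∈ Y}.image fun x ↦ (f x, g (u x))) ≤ 2 * R := by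
  have hfR' : ∀ x ∈ ({x ∈ X | u x ∈ Y} : Finset α), f x < R := fun x hx ↦
    hfR x (mem_filter.1 hx).1
  have hgR' : ∀ x ∈ ({x ∈ X | u x ∈ Y} : Finset α), g (u x) < R := fun x hx ↦
    hgR (u x) (mem_filter.1 hx).2
  rcases hu with hu | hu
  · exact card_image_prodMk_le_of_monotoneOn (hf.monotoneOn _)
      ((hg.comp hu.monotone).monotoneOn _) hfR' hgR'
  · exact card_image_prodMk_le_of_antitoneOn (hf.monotoneOn _)
      ((hg.comp_antitone hu.antitone).antitoneOn _) hfR' hgR'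

lemma sum_card_incidences_mul_sq_le (hmono : ∀ i ∈ L, StrictMono (h i) ∨ StrictAnti (h i))
    (hmeet : (L : Set ι).Pairwise fun i j ↦ {x | h i x = h j x}.Subsingleton)
    (X : Finset α) (Y : Finset β) {R : ℕ} (hR : 0 < R) :
    (∑ i ∈ L, #{x ∈ X | h i x ∈ Y}) * R ^ 2 ≤ 2 * R ^ 3 * #L + (#X * #Y) ^ 2 := by
  obtain ⟨f, hf, hfR, hfcoll⟩ := exists_monotone_card_collisions_le X hR
  obtain ⟨g, hg, hgR, hgcoll⟩ := exists_monotone_card_collisions_le Y hR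
  have hinj : ∀ i ∈ L, Function.Injective (h i) := fun i hi ↦
    (hmono i hi).elim StrictMono.injective StrictAnti.injective
  have hsum : ∑ i ∈ L, #{x ∈ X | h i x ∈ Y} ≤
      2 * R * #L + #(collisions X f) * #(collisions Y g) :=
    calc ∑ i ∈ L, #{x ∈ X | h i x ∈ Y}
      _ ≤ ∑ i ∈ L, (2 * R + #(collisions {x ∈ X | h i x ∈ Y} fun x ↦ (f x, g (h i x)))) :=
        sum_le_sum fun i hi ↦ (card_le_card_image_add_card_collisions _ _).trans
          (Nat.add_le_add_right (card_image_cell_le (hmono i hi) hf hg hfR hgR) _)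
      _ = 2 * R * #L + ∑ i ∈ L, #(collisions {x ∈ X | h i x ∈ Y} fun x ↦ (f x, g (h i x))) := by
        rw [sum_add_distrib, sum_const, smul_eq_mul, mul_comm]
      _ ≤ 2 * R * #L + #(collisions X f) * #(collisions Y g) := by
        gcongr
        exact sum_card_collisions_le hinj hmeet X Y f g
  calc (∑ i ∈ L, #{x ∈ X | h i x ∈ Y}) * R ^ 2
    _ ≤ (2 * R * #L + #(collisions X f) * #(collisions Y g)) * R ^ 2 := by gcongr
    _ = 2 * R ^ 3 * #L + (#(collisions X f) * R) * (#(collisions Y g) * R) := by ring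
    _ ≤ 2 * R ^ 3 * #L + #X ^ 2 * #Y ^ 2 := by gcongr
    _ = 2 * R ^ 3 * #L + (#X * #Y) ^ 2 := by ring

theorem szemeredi_trotter_grid (hmono : ∀ i ∈ L, StrictMono (h i) ∨ StrictAnti (h i))
    (hmeet : (L : Set ι).Pairwise fun i j ↦ {x | h i x = h j x}.Subsingleton)
    (X : Finset α) (Y : Finset β) :
    ((∑ i ∈ L, #{x ∈ X | h i x ∈ Y} : ℕ) : ℝ) ≤
      3 * (#X * #Y * #L : ℝ) ^ ((2 : ℝ) / 3) + 2 * #L := by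
  rcases L.eq_empty_or_nonempty with rfl | hL
  · simp
  · exact le_rpow_of_forall_mul_sq_le (by positivity) (mod_cast hL.card_pos) fun R hR ↦
      mod_cast sum_card_incidences_mul_sq_le hmono hmeet X Y hR

end GridIncidences

section LinearEquation

variable {K : Type*} [Field K] {α₁ α₂ α₃ : K}

/-- The line `α₁ p x + α₂ y + α₃ d = 0` with parameters `(p, d)`, as the function `x ↦ y`
(junk for `α₂ = 0`). Through `p = a c` and `x = c⁻¹` it encodes the solutions `(a, y, d)` of
`α₁ a + α₂ y + α₃ d = 0` as incidences. -/
def solutionLine (α₁ α₂ α₃ : K) (i : K × K) (x : K) : K :=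
  -(α₁ * i.1 * x + α₃ * i.2) / α₂

lemma solutionLine_eq_iff (h₂ : α₂ ≠ 0) {i : K × K} {x y : K} :
    solutionLine α₁ α₂ α₃ i x = y ↔ α₁ * i.1 * x + α₂ * y + α₃ * i.2 = 0 := by
  rw [solutionLine, div_eq_iff h₂]
  constructor <;> intro h <;> linear_combination -h

lemma solutionLine_strictMono_or_strictAnti [LinearOrder K] [IsStrictOrderedRing K]
    (h₁ : α₁ ≠ 0) (h₂ : α₂ ≠ 0) {i : K × K} (hi : i.1 ≠ 0) :
    StrictMono (solutionLine α₁ α₂ α₃ i) ∨ StrictAnti (solutionLine α₁ α₂ α₃ i) := by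
  have hdiff : ∀ x y, solutionLine α₁ α₂ α₃ i y - solutionLine α₁ α₂ α₃ i x =
      -(α₁ * i.1 / α₂) * (y - x) := fun x y ↦ by
    simp only [solutionLine]
    ring
  have hslope : -(α₁ * i.1 / α₂) ≠ 0 := neg_ne_zero.2 (div_ne_zero (mul_ne_zero h₁ hi) h₂)
  rcases hslope.lt_or_gt with hneg | hpos
  · refine .inr fun x y hxy ↦ sub_neg.1 ?_
    rw [hdiff]
    exact mul_neg_of_neg_of_pos hneg (sub_pos.2 hxy)
  · refine .inl fun x y hxy ↦ sub_pos.1 ?_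
    rw [hdiff]
    exact mul_pos hpos (sub_pos.2 hxy)

lemma subsingleton_setOf_solutionLine_eq (h₁ : α₁ ≠ 0) (h₂ : α₂ ≠ 0) (h₃ : α₃ ≠ 0)
    {i j : K × K} (hij : i ≠ j) :
    {x | solutionLine α₁ α₂ α₃ i x = solutionLine α₁ α₂ α₃ j x}.Subsingleton := by
  have hmeet : ∀ x, solutionLine α₁ α₂ α₃ i x = solutionLine α₁ α₂ α₃ j x →
      α₁ * (i.1 - j.1) * x + α₃ * (i.2 - j.2) = 0 := fun x hx ↦ by
    simp only [solutionLine, div_left_inj' h₂, neg_inj] at hx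
    linear_combination hx
  intro x hx y hy
  by_contra hxy
  have hfst : i.1 - j.1 = 0 := by
    have hprod : α₁ * (i.1 - j.1) * (x - y) = 0 := by
      linear_combination hmeet x hx - hmeet y hy
    simpa [h₁, sub_ne_zero.2 hxy] using hprod
  have hsnd : i.2 - j.2 = 0 := by simpa [hfst, h₃] using hmeet x hx
  exact hij (Prod.ext (sub_eq_zero.1 hfst) (sub_eq_zero.1 hsnd))

lemma card_solutions_mul_card_le_sum_card_incidences [DecidableEq K] (h₂ : α₂ ≠ 0)
    (A B D : Finset K) {C : Finset K} (hC : 0 ∉ C) :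
    #{x ∈ A ×ˢ B ×ˢ D | α₁ * x.1 + α₂ * x.2.1 + α₃ * x.2.2 = 0} * #C ≤
      ∑ i ∈ (A * C) ×ˢ D, #{x ∈ C⁻¹ | solutionLine α₁ α₂ α₃ i x ∈ B} := by
  rw [← card_product, ← card_sigma]
  have hC' : ∀ c ∈ C, c ≠ 0 := fun c hc ↦ ne_of_mem_of_not_mem hc hC
  have hline : ∀ a b c d : K, c ≠ 0 → α₁ * a + α₂ * b + α₃ * d = 0 →
      solutionLine α₁ α₂ α₃ (a * c, d) c⁻¹ = b := fun a b c d hc h ↦ by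
    rw [solutionLine_eq_iff h₂, mul_assoc, mul_inv_cancel_right₀ hc, h]
  refine card_le_card_of_injOn (fun z ↦ ⟨(z.1.1 * z.2, z.1.2.2), z.2⁻¹⟩) ?_ ?_
  · rintro ⟨⟨a, b, d⟩, c⟩ hz
    simp only [mem_coe, mem_product, mem_filter] at hz
    obtain ⟨⟨⟨ha, hb, hd⟩, heq⟩, hc⟩ := hz
    simp only [mem_coe, mem_sigma, mem_product, mem_filter]
    exact ⟨⟨mul_mem_mul ha hc, hd⟩, inv_mem_inv hc,
      (hline a b c d (hC' c hc) heq).symm ▸ hb⟩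
  · rintro ⟨⟨a, b, d⟩, c⟩ hz ⟨⟨a', b', d'⟩, c'⟩ hz' heq
    simp only [mem_coe, mem_product, mem_filter] at hz hz'
    simp only [Sigma.mk.injEq, Prod.mk.injEq, heq_eq_eq, inv_inj] at heq
    obtain ⟨⟨hac, rfl⟩, rfl⟩ := heq
    have hc : c ≠ 0 := hC' c hz.2
    obtain rfl : a = a' := mul_right_cancel₀ hc hac
    obtain rfl : b = b' := (hline a b c d hc hz.1.2).symm.trans (hline a b' c d hc hz'.1.2)
    rfl

lemma card_solutions_mul_card_le [LinearOrder K] [IsStrictOrderedRing K]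
    (h₁ : α₁ ≠ 0) (h₂ : α₂ ≠ 0) (h₃ : α₃ ≠ 0) {A C : Finset K} (hA : 0 ∉ A) (hC : 0 ∉ C)
    (B D : Finset K) :
    (#{x ∈ A ×ˢ B ×ˢ D | α₁ * x.1 + α₂ * x.2.1 + α₃ * x.2.2 = 0} * #C : ℝ) ≤
      3 * (#C * #B * (#(A * C) * #D) : ℝ) ^ ((2 : ℝ) / 3) + 2 * (#(A * C) * #D) := by
  have hmono : ∀ i ∈ (A * C) ×ˢ D,
      StrictMono (solutionLine α₁ α₂ α₃ i) ∨ StrictAnti (solutionLine α₁ α₂ α₃ i) := by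
    intro i hi
    obtain ⟨a, ha, c, hc, hac⟩ := mem_mul.1 (mem_product.1 hi).1
    refine solutionLine_strictMono_or_strictAnti h₁ h₂ ?_
    rw [← hac]
    exact mul_ne_zero (ne_of_mem_of_not_mem ha hA) (ne_of_mem_of_not_mem hc hC)
  have hincidences := szemeredi_trotter_grid hmono
    (fun _ _ _ _ hij ↦ subsingleton_setOf_solutionLine_eq h₁ h₂ h₃ hij) C⁻¹ B
  rw [card_inv, card_product, Nat.cast_mul] at hincidences
  refine le_trans ?_ hincidences
  exact_mod_cast card_solutions_mul_card_le_sum_card_incidences h₂ A B D hC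

end LinearEquation

lemma le_mul_rpow_two_thirds_of_le_sq {x y : ℝ} (hx : 0 ≤ x) (hy : 0 ≤ y) (hxy : x ≤ y ^ 2) :
    x ≤ (y * x) ^ ((2 : ℝ) / 3) := by
  refine (pow_le_pow_iff_left₀ hx (by positivity) three_ne_zero).1 ?_
  rw [rpow_two_thirds_pow_three (by positivity)]
  calc x ^ 3 = x * x ^ 2 := by ring
    _ ≤ y ^ 2 * x ^ 2 := by gcongr
    _ = (y * x) ^ 2 := by ring

lemma mul_rpow_two_thirds_div {m n k : ℝ} (hm : 0 < m) (hn : 0 < n) (hk : 0 ≤ k) :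
    (n * m * (k * m)) ^ ((2 : ℝ) / 3) / n =
      (k ^ 2 / (m * n)) ^ ((1 : ℝ) / 3) * m ^ ((5 : ℝ) / 3) := by
  have hm5 : (m ^ ((5 : ℝ) / 3)) ^ 3 = m ^ 5 := by
    rw [← Real.rpow_mul_natCast hm.le, ← Real.rpow_natCast]
    norm_num
  refine (pow_left_inj₀ (by positivity) (by positivity) three_ne_zero).1 ?_
  rw [div_pow, mul_pow, rpow_two_thirds_pow_three (by positivity),
    rpow_one_third_pow_three (by positivity), hm5]
  field_simp

theorem stmt_12_general {K : Type*} [Field K] [LinearOrder K] [IsStrictOrderedRing K]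
    {A C : Finset K} {α₁ α₂ α₃ : K} (hA : A.Nonempty) (hC : C.Nonempty)
    (hA₀ : 0 ∉ A) (hC₀ : 0 ∉ C) (h₁ : α₁ ≠ 0) (h₂ : α₂ ≠ 0) (h₃ : α₃ ≠ 0) :
    (#{x ∈ A ×ˢ A ×ˢ A | α₁ * x.1 + α₂ * x.2.1 + α₃ * x.2.2 = 0} : ℝ) ≤
      5 * ((#(A * C) : ℝ) ^ 2 / (#A * #C)) ^ ((1 : ℝ) / 3) * (#A : ℝ) ^ ((5 : ℝ) / 3) := by
  have hm : (0 : ℝ) < #A := mod_cast hA.card_pos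
  have hn : (1 : ℝ) ≤ #C := mod_cast hC.card_pos
  have hk : (#(A * C) : ℝ) ≤ #A * #C := mod_cast card_mul_le
  have hlines : (#(A * C) * #A : ℝ) ≤ (#C * #A) ^ 2 :=
    calc (#(A * C) * #A : ℝ) ≤ #A * #C * #A := by gcongr
      _ = #C * #A ^ 2 := by ring
      _ ≤ #C ^ 2 * #A ^ 2 := by gcongr; exact le_self_pow₀ hn two_ne_zero
      _ = (#C * #A) ^ 2 := by ring
  have hcount := card_solutions_mul_card_le h₁ h₂ h₃ hA₀ hC₀ A A
  have habsorb := le_mul_rpow_two_thirds_of_le_sq (by positivity) (by positivity) hlines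
  rw [mul_assoc, ← mul_rpow_two_thirds_div hm (by positivity) (by positivity), ← mul_div_assoc,
    le_div_iff₀ (by positivity)]
  linarith

theorem stmt_12 :
    ∃ C : ℝ, 0 < C ∧
      ∀ (A C' : Finset ℝ) (α₁ α₂ α₃ : ℝ),
        A.Nonempty → C'.Nonempty → (0 : ℝ) ∉ A → (0 : ℝ) ∉ C' →
        α₁ ≠ 0 → α₂ ≠ 0 → α₃ ≠ 0 →
        ((((A ×ˢ A ×ˢ A).filter fun x =>
            α₁ * x.1 + α₂ * x.2.1 + α₃ * x.2.2 = 0).card : ℝ)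
          ≤ C * (((A * C').card : ℝ) ^ 2 / ((A.card : ℝ) * (C'.card : ℝ))) ^ ((1 : ℝ) / 3)
              * (A.card : ℝ) ^ ((5 : ℝ) / 3)) := by
  exact ⟨5, by norm_num, fun _ _ _ _ _ ↦ stmt_12_general⟩
end

section
/- There exists an absolute constant c > 0 such that for every finite set A ⊆ ℝ \ {0} with |A| ≥ 2, both |AA + AA| ≥ c·|A|·|A:A|^(1/2) and |AA − AA| ≥ c·|A|·|A:A|^(1/2) hold. -/
open Finset
open scoped Pointwise

/-!
For a ratio `t = a / b` of elements of `A`, the set `A + t • A` is a dilate of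
`b • A + a • A ⊆ A * A + A * A`, and similarly for differences. So it suffices that every set `T` of
at most `|A|²` slopes contains some `t` with `|A + t • A| ≫ |A| * |T| ^ (1 / 2)`, that is, that the
grid `A × A` cannot be covered by few lines `x + t * y = const` for every `t ∈ T`.

Cut `A` into `r ≈ |A| / m` consecutive blocks of at most `m` elements, and thereby `A × A` into
cells. A line meets `O(r)` cells, as it moves monotonically through them. If `N` lines of slope `t`
cover the grid, Cauchy–Schwarz over the `O(r * N)` pairs (line, cell on it) gives at least
`|A|⁴ / O(r * N)` pairs of grid points sharing both line and cell. But two distinct points share a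
line for at most one `t`, so over all `t ∈ T` there are at most `|A|² * (|T| + m²)` such pairs.
Take `m = ⌊|T| ^ (1 / 2)⌋`.
-/

theorem sq_card_le_card_image_mul_card_collisions_s14 {α β : Type*} [DecidableEq β]
    (s : Finset α) (f : α → β) :
    #s ^ 2 ≤ #(s.image f) * #{p ∈ s ×ˢ s | f p.1 = f p.2} := by
  have collisions_eq : #{p ∈ s ×ˢ s | f p.1 = f p.2} = ∑ b ∈ s.image f, #{a ∈ s | f a = b} ^ 2 := by
    rw [card_eq_sum_card_fiberwise (f := fun p => f p.1) (t := s.image f)]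
    · refine sum_congr rfl fun b _ => ?_
      rw [sq, ← card_product, ← filter_product, filter_filter]
      congr 1
      ext
      grind
    · intro p hp
      grind
  rw [collisions_eq, card_eq_sum_card_image f s]
  exact sq_sum_le_card_mul_sum_sq

section Cells

variable {α : Type*} [LinearOrder α] (A : Finset α)

/-- The rank of `x` relative to the finite set `A`: the number of elements of `A` below `x`.
Dividing it by `m` cuts the line into intervals with at most `m` elements of `A` each. -/
def rankIn (x : α) : ℕ := #{z ∈ A | z < x}

theorem rankIn_mono : Monotone (rankIn A) := fun _ _ hxy =>
  card_le_card <| monotone_filter_right A fun _ _ hz => hz.trans_le hxy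

theorem rankIn_strictMonoOn : StrictMonoOn (rankIn A) A := fun x hx y _ hxy =>
  card_lt_card <| ssubset_iff_of_subset (monotone_filter_right A fun _ _ hz => hz.trans hxy) |>.2
    ⟨x, by simpa [hxy] using hx, by simp⟩

theorem card_filter_rankIn_div_eq_le {m : ℕ} (hm : 0 < m) (k : ℕ) :
    #{x ∈ A | rankIn A x / m = k} ≤ m := by
  have maps_to : Set.MapsTo (rankIn A) ({x ∈ A | rankIn A x / m = k} : Finset α)
      (Ico (k * m) (k * m + m) : Finset ℕ) := by
    intro x hx
    obtain rfl : rankIn A x / m = k := (mem_filter.1 hx).2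
    exact mem_coe.2 <| mem_Ico.2 ⟨Nat.div_mul_le_self _ _, Nat.lt_div_mul_add hm⟩
  have inj_on : Set.InjOn (rankIn A) ({x ∈ A | rankIn A x / m = k} : Finset α) :=
    (rankIn_strictMonoOn A).injOn.mono (coe_subset.2 (filter_subset _ _))
  simpa using card_le_card_of_injOn _ maps_to inj_on

theorem exists_monotone_card_fiber_le {m : ℕ} (hm : 0 < m) :
    ∃ g : α → ℕ, Monotone g ∧ (∀ x, g x < #A / m + 1) ∧ ∀ k, #{x ∈ A | g x = k} ≤ m :=
  ⟨fun x => rankIn A x / m, fun _ _ hxy => Nat.div_le_div_right (rankIn_mono A hxy),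
    fun _ => Nat.lt_succ_of_le <| Nat.div_le_div_right <| card_filter_le A _,
    card_filter_rankIn_div_eq_le A hm⟩

end Cells

section Lines

variable {R : Type*} [Ring R] [LinearOrder R] {g : R → ℕ} {t : R} {p q : R × R}

/-- Given a map `g` that assigns to each scalar the index of its cell, this records the line of the
pencil `x + t * y = const` through `p` together with the diagonal (for `0 ≤ t`) or antidiagonal (for
`t < 0`) of the grid of cells that contains `p`. For monotone `g`, points with the same value lie in
the same cell. -/
def lineCell (g : R → ℕ) (t : R) (p : R × R) : R × ℤ :=
  (p.1 + t * p.2, if 0 ≤ t then (g p.1 : ℤ) - g p.2 else g p.1 + g p.2)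

theorem card_image_lineCell_le {A : Finset R} {r : ℕ} (hr : ∀ x ∈ A, g x < r) :
    #((A ×ˢ A).image (lineCell g t)) ≤ #(A + t • A) * (3 * r) := by
  have image_subset : (A ×ˢ A).image (lineCell g t) ⊆ (A + t • A) ×ˢ Ico (-r : ℤ) (2 * r) := by
    refine image_subset_iff.2 fun p hp => ?_
    obtain ⟨hp₁, hp₂⟩ := mem_product.1 hp
    refine mem_product.2 ⟨add_mem_add hp₁ (smul_mem_smul_finset hp₂), mem_Ico.2 ?_⟩
    have := hr p.1 hp₁
    have := hr p.2 hp₂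
    unfold lineCell
    grind
  refine (card_le_card image_subset).trans_eq ?_
  rw [card_product, Int.card_Ico]
  congr 1
  omega

variable [IsStrictOrderedRing R]

theorem cell_eq_of_lineCell_eq (hg : Monotone g) (h : lineCell g t p = lineCell g t q) :
    g p.1 = g q.1 ∧ g p.2 = g q.2 := by
  wlog hpq : p.2 ≤ q.2 generalizing p q
  · exact (this h.symm (le_of_not_ge hpq)).imp Eq.symm Eq.symm
  obtain ⟨same_line, same_diagonal⟩ := Prod.mk.inj h
  have g_le := hg hpq
  split_ifs at same_diagonal with ht
  · have g_ge : g q.1 ≤ g p.1 := hg <| by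
      have : q.1 + t * p.2 ≤ p.1 + t * p.2 := same_line ▸ by gcongr
      exact le_of_add_le_add_right this
    omega
  · have g_ge : g p.1 ≤ g q.1 := hg <| by
      have : p.1 + t * q.2 ≤ q.1 + t * q.2 :=
        same_line ▸ add_le_add_right (mul_le_mul_of_nonpos_left hpq (le_of_not_ge ht)) _
      exact le_of_add_le_add_right this
    omega

theorem card_filter_lineCell_eq_le_one (T : Finset R) (hpq : p ≠ q) :
    #{t ∈ T | lineCell g t p = lineCell g t q} ≤ 1 := by
  refine card_le_one.2 fun t ht u hu => ?_
  have line_eq : p.1 + t * p.2 = q.1 + t * q.2 := congrArg Prod.fst (mem_filter.1 ht).2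
  have line_eq_u : p.1 + u * p.2 = q.1 + u * q.2 := congrArg Prod.fst (mem_filter.1 hu).2
  have product_eq_zero : (t - u) * (p.2 - q.2) = 0 :=
    calc (t - u) * (p.2 - q.2)
        = (p.1 + t * p.2 - (q.1 + t * q.2)) - (p.1 + u * p.2 - (q.1 + u * q.2)) := by
          noncomm_ring
      _ = 0 := by rw [line_eq, line_eq_u, sub_self, sub_self, sub_zero]
  refine sub_eq_zero.1 <| (mul_eq_zero.1 product_eq_zero).resolve_right fun h => hpq ?_
  have snd_eq := sub_eq_zero.1 h
  exact Prod.ext (by simpa [snd_eq] using line_eq) snd_eq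

theorem sum_card_filter_lineCell_eq_le (hg : Monotone g) {A : Finset R} {m : ℕ}
    (hm : ∀ k, #{x ∈ A | g x = k} ≤ m) (T : Finset R) (p : R × R) :
    ∑ t ∈ T, #{q ∈ A ×ˢ A | lineCell g t p = lineCell g t q} ≤ #T + m ^ 2 := by
  have card_slopes_le (q : R × R) : #{t ∈ T | lineCell g t p = lineCell g t q} ≤
      (if p = q then #T else 0) + if g p.1 = g q.1 ∧ g p.2 = g q.2 then 1 else 0 := by
    obtain rfl | hpq := eq_or_ne p q
    · simp
    rw [if_neg hpq, zero_add]
    split_ifs with same_cell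
    · exact card_filter_lineCell_eq_le_one T hpq
    · exact (card_eq_zero.2 <| filter_eq_empty_iff.2 fun _ _ h =>
        same_cell (cell_eq_of_lineCell_eq hg h)).le
  have card_cell_le : #{q ∈ A ×ˢ A | g p.1 = g q.1 ∧ g p.2 = g q.2} ≤ m ^ 2 := by
    rw [filter_product (g p.1 = g ·) (g p.2 = g ·), card_product, sq]
    simpa only [eq_comm] using Nat.mul_le_mul (hm (g p.1)) (hm (g p.2))
  calc ∑ t ∈ T, #{q ∈ A ×ˢ A | lineCell g t p = lineCell g t q}
      = ∑ q ∈ A ×ˢ A, #{t ∈ T | lineCell g t p = lineCell g t q} :=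
        sum_card_bipartiteAbove_eq_sum_card_bipartiteBelow _
    _ ≤ ∑ q ∈ A ×ˢ A, ((if p = q then #T else 0) +
          if g p.1 = g q.1 ∧ g p.2 = g q.2 then 1 else 0) := sum_le_sum fun q _ => card_slopes_le q
    _ ≤ #T + m ^ 2 := by
      rw [sum_add_distrib, ← card_filter, sum_ite_eq]
      exact Nat.add_le_add (by split_ifs <;> simp) card_cell_le

theorem sum_card_collisions_lineCell_le (hg : Monotone g) {A : Finset R} {m : ℕ}
    (hm : ∀ k, #{x ∈ A | g x = k} ≤ m) (T : Finset R) :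
    ∑ t ∈ T, #{z ∈ (A ×ˢ A) ×ˢ (A ×ˢ A) | lineCell g t z.1 = lineCell g t z.2} ≤
      #A ^ 2 * (#T + m ^ 2) := by
  have collisions_eq (t : R) :
      #{z ∈ (A ×ˢ A) ×ˢ (A ×ˢ A) | lineCell g t z.1 = lineCell g t z.2} =
        ∑ p ∈ A ×ˢ A, #{q ∈ A ×ˢ A | lineCell g t p = lineCell g t q} := by
    simp only [card_filter, sum_product]
  calc _ = ∑ p ∈ A ×ˢ A, ∑ t ∈ T, #{q ∈ A ×ˢ A | lineCell g t p = lineCell g t q} := by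
        simp only [collisions_eq]
        exact sum_comm
    _ ≤ ∑ _p ∈ A ×ˢ A, (#T + m ^ 2) :=
        sum_le_sum fun p _ => sum_card_filter_lineCell_eq_le hg hm T p
    _ = #A ^ 2 * (#T + m ^ 2) := by rw [sum_const, smul_eq_mul, card_product, ← sq]

end Lines

section Dilates

variable {R : Type*} [Ring R] [LinearOrder R] [IsStrictOrderedRing R] {A T : Finset R} {N : ℕ}

theorem card_slopes_mul_sq_card_le (hN : ∀ t ∈ T, #(A + t • A) ≤ N) {m : ℕ} (hm : 0 < m) :
    #T * #A ^ 2 ≤ N * (3 * (#A / m + 1)) * (#T + m ^ 2) := by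
  obtain rfl | hA := A.eq_empty_or_nonempty
  · simp
  obtain ⟨g, g_mono, g_lt, g_fiber⟩ := exists_monotone_card_fiber_le A hm
  set E : R → ℕ := fun t =>
    #{z ∈ (A ×ˢ A) ×ˢ (A ×ˢ A) | lineCell g t z.1 = lineCell g t z.2}
  have fourth_power_le : ∀ t ∈ T, #A ^ 4 ≤ N * (3 * (#A / m + 1)) * E t := fun t ht =>
    calc #A ^ 4 = #(A ×ˢ A) ^ 2 := by rw [card_product]; ring
      _ ≤ #((A ×ˢ A).image (lineCell g t)) * E t := sq_card_le_card_image_mul_card_collisions_s14 _ _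
      _ ≤ N * (3 * (#A / m + 1)) * E t := by
        gcongr
        exact (card_image_lineCell_le fun x _ => g_lt x).trans (Nat.mul_le_mul_right _ (hN t ht))
  refine Nat.le_of_mul_le_mul_left ?_ (pow_pos hA.card_pos 2)
  calc #A ^ 2 * (#T * #A ^ 2) = ∑ _t ∈ T, #A ^ 4 := by rw [sum_const, smul_eq_mul]; ring
    _ ≤ N * (3 * (#A / m + 1)) * ∑ t ∈ T, E t := by
      rw [mul_sum]
      exact sum_le_sum fourth_power_le
    _ ≤ N * (3 * (#A / m + 1)) * (#A ^ 2 * (#T + m ^ 2)) := by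
      gcongr
      exact sum_card_collisions_lineCell_le g_mono g_fiber T
    _ = #A ^ 2 * (N * (3 * (#A / m + 1)) * (#T + m ^ 2)) := by ring

theorem card_mul_natSqrt_card_slopes_le (hT : #T ≤ #A ^ 2) (hN : ∀ t ∈ T, #(A + t • A) ≤ N) :
    #A * (#T).sqrt ≤ 12 * N := by
  obtain hT₀ | hT₀ := (#T).eq_zero_or_pos
  · simp [hT₀]
  set m := (#T).sqrt
  have m_pos : 0 < m := Nat.sqrt_pos.2 hT₀
  have m_sq_le : m ^ 2 ≤ #T := Nat.sqrt_le' _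
  have m_le : m ≤ #A := (Nat.sqrt_le_sqrt hT).trans_eq (Nat.sqrt_eq' _)
  have cells_le : (#A / m + 1) * m ≤ 2 * #A := by
    linarith [Nat.div_mul_le_self #A m]
  have sq_card_le : #A ^ 2 ≤ 6 * N * (#A / m + 1) := by
    refine Nat.le_of_mul_le_mul_left ?_ hT₀
    calc #T * #A ^ 2 ≤ N * (3 * (#A / m + 1)) * (#T + m ^ 2) := card_slopes_mul_sq_card_le hN m_pos
      _ ≤ N * (3 * (#A / m + 1)) * (#T + #T) := by gcongr
      _ = #T * (6 * N * (#A / m + 1)) := by ring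
  refine Nat.le_of_mul_le_mul_left ?_ (m_pos.trans_le m_le)
  calc #A * (#A * m) = #A ^ 2 * m := by ring
    _ ≤ 6 * N * (#A / m + 1) * m := by gcongr
    _ = 6 * N * ((#A / m + 1) * m) := by ring
    _ ≤ 6 * N * (2 * #A) := by gcongr
    _ = #A * (12 * N) := by ring

theorem card_mul_sqrt_card_slopes_le (hT : #T ≤ #A ^ 2) (hN : ∀ t ∈ T, #(A + t • A) ≤ N) :
    #A * √(#T : ℝ) ≤ 24 * N := by
  obtain hT₀ | hT₀ := (#T).eq_zero_or_pos
  · simp [hT₀]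
  have sqrt_le : √(#T : ℝ) ≤ 2 * (#T).sqrt := by
    have one_le : (1 : ℝ) ≤ (#T).sqrt := by exact_mod_cast Nat.sqrt_pos.2 hT₀
    linarith [Real.real_sqrt_le_nat_sqrt_succ (a := #T)]
  have card_mul_le : (#A : ℝ) * (#T).sqrt ≤ 12 * N := by
    exact_mod_cast card_mul_natSqrt_card_slopes_le hT hN
  calc #A * √(#T : ℝ) ≤ #A * (2 * (#T).sqrt) := by gcongr
    _ ≤ 24 * N := by linarith

end Dilates

section Ratios

variable {K : Type*} [Field K] [DecidableEq K] {A : Finset K}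

theorem card_add_smul_le_of_mem_div (h0 : 0 ∉ A) {t : K} (ht : t ∈ A / A) :
    #(A + t • A) ≤ #(A * A + A * A) := by
  obtain ⟨a, ha, b, hb, rfl⟩ := mem_div.1 ht
  have hb₀ : b ≠ 0 := ne_of_mem_of_not_mem hb h0
  calc #(A + (a / b) • A) = #(b • A + a • A) := by
        rw [← card_smul_finset₀ hb₀, smul_add, smul_smul, mul_div_cancel₀ _ hb₀]
    _ ≤ #(A * A + A * A) :=
        card_le_card <| add_subset_add (smul_finset_subset_mul hb) (smul_finset_subset_mul ha)

theorem card_sub_smul_le_of_mem_div (h0 : 0 ∉ A) {t : K} (ht : t ∈ A / A) :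
    #(A - t • A) ≤ #(A * A - A * A) := by
  obtain ⟨a, ha, b, hb, rfl⟩ := mem_div.1 ht
  have hb₀ : b ≠ 0 := ne_of_mem_of_not_mem hb h0
  calc #(A - (a / b) • A) = #(b • A - a • A) := by
        rw [← card_smul_finset₀ hb₀, sub_eq_add_neg, smul_add, smul_finset_neg,
          ← sub_eq_add_neg, smul_smul, mul_div_cancel₀ _ hb₀]
    _ ≤ #(A * A - A * A) :=
        card_le_card <| sub_subset_sub (smul_finset_subset_mul hb) (smul_finset_subset_mul ha)

end Ratios

theorem stmt_14_general {K : Type*} [Field K] [LinearOrder K] [IsStrictOrderedRing K]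
    (A : Finset K) (h0 : 0 ∉ A) :
    1 / 24 * (#A : ℝ) * (#(A / A) : ℝ) ^ ((1 : ℝ) / 2) ≤ #(A * A + A * A) ∧
      1 / 24 * (#A : ℝ) * (#(A / A) : ℝ) ^ ((1 : ℝ) / 2) ≤ #(A * A - A * A) := by
  have card_div_le_sq : #(A / A) ≤ #A ^ 2 := card_div_le.trans_eq (sq _).symm
  have card_neg_div : #(-(A / A)) = #(A / A) := card_neg _
  have sum_bound : #A * √(#(A / A) : ℝ) ≤ 24 * #(A * A + A * A) :=
    card_mul_sqrt_card_slopes_le card_div_le_sq fun _ => card_add_smul_le_of_mem_div h0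
  have diff_bound : #A * √(#(-(A / A)) : ℝ) ≤ 24 * #(A * A - A * A) := by
    refine card_mul_sqrt_card_slopes_le (card_neg_div.trans_le card_div_le_sq) fun t ht => ?_
    simpa [sub_eq_add_neg] using card_sub_smul_le_of_mem_div h0 (mem_neg'.1 ht)
  rw [card_neg_div] at diff_bound
  rw [← Real.sqrt_eq_rpow]
  constructor <;> linarith

theorem stmt_14 :
    ∃ c : ℝ, 0 < c ∧
      ∀ A : Finset ℝ, (0 : ℝ) ∉ A → 2 ≤ A.card →
        c * (A.card : ℝ) * ((A / A).card : ℝ) ^ ((1 : ℝ) / 2)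
            ≤ ((A * A + A * A).card : ℝ) ∧
        c * (A.card : ℝ) * ((A / A).card : ℝ) ^ ((1 : ℝ) / 2)
            ≤ ((A * A - A * A).card : ℝ) :=
  ⟨1 / 24, by norm_num, fun A h0 _ => stmt_14_general A h0⟩
end
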